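/- Let (U,ρ) be a complete metric space, let g ∈ W(ℝ,U), and let F ∈ W(ℝ, cl U). Then for any increasing function η : [0,+∞) → [0,+∞) with η(0) = 0 and η(t) > 0 for every t > 0, there exists a function f ∈ W(ℝ,U) such that Mod f ⊆ Mod g + Mod F, f(t) ∈ F(t) for a.e. t ∈ ℝ, and ρ(f(t), g(t)) ≤ ρ(g(t), F(t)) + η(ρ(g(t), F(t))) for a.e. t ∈ ℝ (where ρ(x,A) = inf_{y∈A} ρ(x,y)). -/

import Mathlib

open MeasureTheory Filter Topology TopologicalSpace
open scoped ENNReal Pointwise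

noncomputable section

/-- The truncated ("bounded") distance `ρ'(x,y) = min {1, ρ(x,y)}` on a metric space. -/
def bdist {α : Type*} [PseudoMetricSpace α] : α → α → ℝ := fun x y => min 1 (dist x y)

/-- The Hausdorff distance `dist_{ρ'}` (corresponding to the truncated metric `ρ'`)
between non-empty closed subsets of a metric space. -/
def clDist {α : Type*} [MetricSpace α] : Closeds α → Closeds α → ℝ :=
  fun A B => (min 1 (EMetric.hausdorffEdist (A : Set α) (B : Set α))).toReal

/-- The Hausdorff distance `dist_ρ` between (non-empty closed bounded) subsets. -/
def clbDist {α : Type*} [MetricSpace α] : Closeds α → Closeds α → ℝ :=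
  fun A B => Metric.hausdorffDist (A : Set α) (B : Set α)

/-- `D^{(d)}_{p,l}(f,g) = ( sup_ξ (1/l) ∫_ξ^{ξ+l} d(f t, g t)^p dt )^{1/p}`,
valued in `ℝ≥0∞`. -/
def weylD {α : Type*} (d : α → α → ℝ) (p l : ℝ) (f g : ℝ → α) : ℝ≥0∞ :=
  (⨆ ξ : ℝ, ENNReal.ofReal (1 / l) *
      ∫⁻ t in Set.Icc ξ (ξ + l), ENNReal.ofReal (d (f t) (g t) ^ p)) ^ (1 / p)

/-- The Weyl semimetric `D^{(d)}_p(f,g) = lim_{l → +∞} D^{(d)}_{p,l}(f,g)`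
(the limit exists; it is formalized here as a `limsup`). -/
def weylDinf {α : Type*} (d : α → α → ℝ) (p : ℝ) (f g : ℝ → α) : ℝ≥0∞ :=
  Filter.limsup (fun l => weylD d p l f g) Filter.atTop

/-- Membership in `M_p(ℝ, α)`: `f` is (strongly) measurable and
`sup_ξ ∫_ξ^{ξ+1} d(f t, x₀)^p dt < +∞`. -/
def MemMp {α : Type*} [TopologicalSpace α] (d : α → α → ℝ) (p : ℝ) (x₀ : α)
    (f : ℝ → α) : Prop :=
  AEStronglyMeasurable f MeasureTheory.volume ∧
  ∃ C : ℝ, ∀ ξ : ℝ,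
    (∫⁻ t in Set.Icc ξ (ξ + 1), ENNReal.ofReal (d (f t) x₀ ^ p)) ≤ ENNReal.ofReal C

/-- A set `T ⊆ ℝ` is relatively dense. -/
def RelDense (T : Set ℝ) : Prop := ∃ a > 0, ∀ ξ : ℝ, (Set.Icc ξ (ξ + a) ∩ T).Nonempty

/-- The set of `(ε, D^{(d)}_{p,l})`-almost periods of `f`. -/
def APeriodsL {α : Type*} (d : α → α → ℝ) (p l ε : ℝ) (f : ℝ → α) : Set ℝ :=
  {τ | weylD d p l f (fun t => f (t + τ)) < ENNReal.ofReal ε}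

/-- The set `P^{(d)}_p(ε; f)` of `(ε, D^{(d)}_p)`-almost periods of `f`. -/
def APeriods {α : Type*} (d : α → α → ℝ) (p ε : ℝ) (f : ℝ → α) : Set ℝ :=
  {τ | weylDinf d p f (fun t => f (t + τ)) < ENNReal.ofReal ε}

/-- Membership in the space `W_p(ℝ, α)` of Weyl almost periodic functions of order `p`
w.r.t. the distance `d` (with distinguished point `x₀`). -/
def MemWp {α : Type*} [TopologicalSpace α] (d : α → α → ℝ) (p : ℝ) (x₀ : α)
    (f : ℝ → α) : Prop :=
  MemMp d p x₀ f ∧ ∀ ε > 0, ∃ l > 0, RelDense (APeriodsL d p l ε f)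

/-- The module `Mod f`: the additive group of all `λ ∈ ℝ` such that `e^{iλτ_j} → 1`
for every `f`-returning sequence `{τ_j}` (a sequence with `D^{(d)}_1(f, f(·+τ_j)) → 0`,
where `d` is the relevant bounded distance). -/
def WMod {α : Type*} (d : α → α → ℝ) (f : ℝ → α) : Set ℝ :=
  {lam : ℝ | ∀ τ : ℕ → ℝ,
    Tendsto (fun j => weylDinf d 1 f (fun t => f (t + τ j))) atTop (nhds 0) →
    Tendsto (fun j => Complex.exp (Complex.I * ((lam * τ j : ℝ) : ℂ))) atTop (nhds 1)}

/-- `κ_W(T) = lim_{l → +∞} sup_ξ (1/l) meas([ξ, ξ+l] ∩ T)` (formalized as a `limsup`). -/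
def kappaW (T : Set ℝ) : ℝ≥0∞ :=
  Filter.limsup (fun l : ℝ => ⨆ ξ : ℝ,
    ENNReal.ofReal (1 / l) * MeasureTheory.volume (Set.Icc ξ (ξ + l) ∩ T)) Filter.atTop

/-- Membership in `M*_p(ℝ, α)`. -/
def MemMpStar {α : Type*} [TopologicalSpace α] (d : α → α → ℝ) (p : ℝ) (x₀ : α)
    (f : ℝ → α) : Prop :=
  MemMp d p x₀ f ∧
  ∀ ε > 0, ∃ δ > 0, ∀ T : Set ℝ, MeasurableSet T → kappaW T < ENNReal.ofReal δ →
    Filter.limsup (fun l : ℝ => ⨆ ξ : ℝ, ENNReal.ofReal (1 / l) *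
        ∫⁻ t in Set.Icc ξ (ξ + l) ∩ T, ENNReal.ofReal (d (f t) x₀ ^ p)) Filter.atTop
      < ENNReal.ofReal ε

/-- Distance from a point to a set w.r.t. the distance `d`, valued in `ℝ≥0∞`
(`∞` for the empty set). -/
def dInfDist {α : Type*} (d : α → α → ℝ) (x : α) (K : Set α) : ℝ≥0∞ :=
  ⨅ y ∈ K, ENNReal.ofReal (d x y)

/-- Membership in `W̃_p(ℝ, α)`: conditions 1) (relatively dense sets of
`(ε, D^{(d)}_p)`-almost periods) and 2) (approximate compactness of values). -/
def MemWpTilde {α : Type*} [TopologicalSpace α] (d : α → α → ℝ) (p : ℝ) (x₀ : α)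
    (f : ℝ → α) : Prop :=
  MemMp d p x₀ f ∧
  (∀ ε > 0, RelDense (APeriods d p ε f)) ∧
  (∀ ε > 0, ∀ δ > 0, ∃ K : Set α, IsCompact K ∧
      kappaW {t | ENNReal.ofReal ε ≤ dInfDist d (f t) K} < ENNReal.ofReal δ)

/-- The support of a Borel measure on a topological space. -/
def measSupport {α : Type*} [TopologicalSpace α] [MeasurableSpace α]
    (μ : Measure α) : Set α :=
  {x | ∀ V : Set α, IsOpen V → x ∈ V → 0 < μ V}

/-- `r_δ(x, μ) = inf { r > 0 : μ[U_r(x)] > δ }`. -/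
def rdelta {α : Type*} [PseudoMetricSpace α] [MeasurableSpace α]
    (x : α) (μ : Measure α) (δ : ℝ) : ℝ :=
  sInf {r : ℝ | 0 < r ∧ ENNReal.ofReal δ < μ (Metric.ball x r)}

/-- The Lévy–Prokhorov distance on Borel probability measures. -/
def lpDist {α : Type*} [MeasurableSpace α] [PseudoEMetricSpace α] :
    ProbabilityMeasure α → ProbabilityMeasure α → ℝ :=
  fun μ ν => MeasureTheory.levyProkhorovDist (μ : Measure α) (ν : Measure α)

end

theorem waps_pow_lower {E H : Type*} [NormedAddCommGroup E] [NormedSpace ℂ E]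
    [NormedAddCommGroup H] [InnerProductSpace ℂ H] (J : E →L[ℂ] H) (T : E →L[ℂ] E)
    (hsymm : ∀ f g, inner ℂ (J (T f)) (J g) = inner ℂ (J f) (J (T g))) (v : E)
    (h0 : J v ≠ 0) (h1 : J (T v) ≠ 0) :
    ∃ b > 0, ∃ q > 0, ∀ n : ℕ, b * q ^ n ≤ ‖T ^ n‖ := by
  set β : ℕ → ℝ := fun n => ‖J ((T ^ n) v)‖ with hβ
  have hb0 : 0 < β 0 := by simpa [hβ] using h0
  have hb1 : 0 < β 1 := by simpa [hβ] using h1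
  have hcs : ∀ n, β (n + 1) ^ 2 ≤ β n * β (n + 2) := by
    intro n
    have e1 : (T ^ (n + 1)) v = T ((T ^ n) v) := by rw [pow_succ']; rfl
    have e2 : (T ^ (n + 2)) v = T ((T ^ (n + 1)) v) := by rw [pow_succ']; rfl
    have h := hsymm ((T ^ n) v) ((T ^ (n + 1)) v)
    rw [← e1, ← e2] at h
    have h2 : ‖inner ℂ (J ((T ^ (n + 1)) v)) (J ((T ^ (n + 1)) v))‖ = β (n + 1) ^ 2 := by
      rw [inner_self_eq_norm_sq_to_K]; simp [hβ]
    rw [← h2, h]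
    exact norm_inner_le_norm _ _
  set q := β 1 / β 0 with hq
  have hqpos : 0 < q := div_pos hb1 hb0
  have key : ∀ n, 0 < β n ∧ q * β n ≤ β (n + 1) := by
    intro n
    induction n with
    | zero => exact ⟨hb0, by rw [hq]; field_simp; exact le_refl _⟩
    | succ n ih =>
      obtain ⟨h1, h2⟩ := ih
      have h3 : 0 < β (n + 1) := lt_of_lt_of_le (by positivity) h2
      refine ⟨h3, ?_⟩
      have h4 := hcs n
      have : β n * (q * β (n + 1)) ≤ β n * β (n + 2) := by
        calc β n * (q * β (n + 1)) = (q * β n) * β (n + 1) := by ring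
          _ ≤ β (n + 1) * β (n + 1) := by gcongr
          _ = β (n + 1) ^ 2 := by ring
          _ ≤ _ := h4
      exact le_of_mul_le_mul_left this h1
  have key2 : ∀ n, β 0 * q ^ n ≤ β n := by
    intro n
    induction n with
    | zero => simp
    | succ n ih =>
      calc β 0 * q ^ (n + 1) = q * (β 0 * q ^ n) := by ring
        _ ≤ q * β n := by gcongr
        _ ≤ _ := (key n).2
  have hv : 0 < ‖v‖ := by
    rw [norm_pos_iff]; rintro rfl; simp at h0
  have hJ : 0 < ‖J‖ := by
    rw [norm_pos_iff]; rintro rfl; simp at h0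
  refine ⟨β 0 / (‖J‖ * ‖v‖), by positivity, q, hqpos, fun n => ?_⟩
  rw [div_mul_eq_mul_div, div_le_iff₀ (by positivity)]
  calc β 0 * q ^ n ≤ β n := key2 n
    _ ≤ ‖J‖ * ‖(T ^ n) v‖ := J.le_opNorm _
    _ ≤ ‖J‖ * (‖T ^ n‖ * ‖v‖) := by gcongr; exact (T ^ n).le_opNorm _
    _ = _ := by ring

theorem waps_exists_char_aux {A : Type*} [NormedCommRing A] [NormedAlgebra ℂ A] [CompleteSpace A]
    (T : A) (hT : ∃ b > 0, ∃ q > 0, ∀ n : ℕ, b * q ^ n ≤ ‖T ^ n‖) :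
    ∃ φ : A →ₐ[ℂ] ℂ, φ T ≠ 0 ∧ ∃ C > 0, ∀ x, ‖φ x‖ ≤ C * ‖x‖ := by
  obtain ⟨b, hb, q, hq, h⟩ := hT
  have hnt : Nontrivial A := by
    refine ⟨⟨1, 0, fun h10 => ?_⟩⟩
    have := h 0
    simp [h10] at this
    linarith
  have hrad : spectralRadius ℂ T ≠ 0 := by
    have h1 := spectrum.pow_norm_pow_one_div_tendsto_nhds_spectralRadius T
    have h2 : Tendsto (fun n : ℕ => ENNReal.ofReal ((b * q ^ n) ^ (1 / n : ℝ))) atTop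
        (𝓝 (ENNReal.ofReal (1 * q))) := by
      refine ENNReal.tendsto_ofReal ?_
      have h3 : Tendsto (fun n : ℕ => b ^ (1 / n : ℝ) * q) atTop (𝓝 (1 * q)) := by
        refine Tendsto.mul_const _ ?_
        have : Tendsto (fun n : ℕ => (1 / n : ℝ)) atTop (𝓝 0) := tendsto_one_div_atTop_nhds_zero_nat
        have h5 := (Real.continuousAt_const_rpow (a := b) (b := 0) hb.ne').tendsto.comp this
        simpa [Function.comp_def] using h5
      refine h3.congr' ?_
      filter_upwards [eventually_gt_atTop 0] with n hn
      rw [Real.mul_rpow hb.le (by positivity), ← Real.rpow_natCast, ← Real.rpow_mul hq.le]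
      have : (n : ℝ) * (1 / n) = 1 := by field_simp
      rw [this, Real.rpow_one]
    have h4 := le_of_tendsto_of_tendsto' h2 h1 (fun n => ENNReal.ofReal_le_ofReal
      (Real.rpow_le_rpow (by positivity) (h n) (by positivity)))
    intro h0
    rw [h0] at h4
    simp at h4
    linarith
  obtain ⟨k, hk, hk2⟩ := spectrum.exists_nnnorm_eq_spectralRadius T
  obtain ⟨f, hf⟩ := WeakDual.CharacterSpace.mem_spectrum_iff_exists.1 hk
  refine ⟨WeakDual.CharacterSpace.toAlgHom f, ?_, ‖(WeakDual.toStrongDual f.1)‖ + 1, by positivity, fun x => ?_⟩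
  · change f T ≠ 0
    rw [hf]
    rintro rfl
    simp at hk2
    exact hrad hk2.symm
  · have := (WeakDual.toStrongDual f.1).le_opNorm x
    refine le_trans this ?_
    gcongr
    linarith

theorem waps_exists_char {E : Type*} [NormedAddCommGroup E] [NormedSpace ℂ E] [CompleteSpace E]
    {G : Type*} [AddCommGroup G] (S : G → E →L[ℂ] E) (hS0 : S 0 = 1)
    (hSadd : ∀ x y, S (x + y) = S x * S y) (hSn : ∀ x, ‖S x‖ ≤ 1) (T : E →L[ℂ] E)
    (hST : ∀ x, S x * T = T * S x)
    (hT : ∃ b > 0, ∃ q > 0, ∀ n : ℕ, b * q ^ n ≤ ‖T ^ n‖) :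
    ∃ ψ : G → ℂ, (∀ x y, ψ (x + y) = ψ x * ψ y) ∧ (∀ x, ‖ψ x‖ = 1) ∧
      ∃ C > 0, ∀ x (c : ℂ), ‖ψ x - c‖ ≤ C * ‖S x * T - c • T‖ := by
  classical
  set s : Set (E →L[ℂ] E) := insert T (Set.range S) with hs
  have hcomm : ∀ a ∈ s, ∀ b ∈ s, a * b = b * a := by
    rintro a (rfl | ⟨x, rfl⟩) b (rfl | ⟨y, rfl⟩)
    · rfl
    · exact (hST y).symm
    · exact hST x
    · rw [← hSadd, ← hSadd, add_comm]
  have hc : ∀ x y : Algebra.adjoin ℂ s, x * y = y * x := by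
    have := Algebra.isMulCommutative_adjoin ℂ hcomm
    intro x y
    exact mul_comm' x y
  set B := (Algebra.adjoin ℂ s).topologicalClosure with hB
  let _ : CommRing B := Subalgebra.commRingTopologicalClosure _ hc
  let _ : NormedCommRing B := { (inferInstance : NormedRing B) with mul_comm := mul_comm }
  have : CompleteSpace B := (Subalgebra.isClosed_topologicalClosure _).completeSpace_coe
  have hmem : ∀ a ∈ s, a ∈ B := fun a ha =>
    Subalgebra.le_topologicalClosure _ (Algebra.subset_adjoin ha)
  set T' : B := ⟨T, hmem T (by simp [hs])⟩
  set S' : G → B := fun x => ⟨S x, hmem _ (by simp [hs])⟩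
  obtain ⟨φ, hφ, C, hC, hφC⟩ := waps_exists_char_aux T' (by
    obtain ⟨b, hb, q, hq, h⟩ := hT
    have hp : ∀ n : ℕ, ((T' ^ n : B) : E →L[ℂ] E) = T ^ n := by
      intro n
      induction n with
      | zero => rw [pow_zero, pow_zero]; rfl
      | succ n ih => rw [pow_succ, pow_succ, ← ih]; rfl
    refine ⟨b, hb, q, hq, fun n => (h n).trans_eq ?_⟩
    rw [← hp n]; rfl)
  have hadd : ∀ x y, φ (S' (x + y)) = φ (S' x) * φ (S' y) := by
    intro x y
    rw [← map_mul]; congr 1; exact Subtype.ext (hSadd x y)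
  have h1 : φ (S' 0) = 1 := by
    rw [← map_one φ]; congr 1; exact Subtype.ext hS0
  have hle : ∀ x, ‖φ (S' x)‖ ≤ 1 := by
    intro x
    have hpow : ∀ n : ℕ, φ (S' (n • x)) = φ (S' x) ^ n := by
      intro n
      induction n with
      | zero => simp [h1]
      | succ n ih => rw [succ_nsmul, hadd, ih, pow_succ]
    by_contra! hlt
    obtain ⟨n, hn⟩ := pow_unbounded_of_one_lt C hlt
    have := hφC (S' (n • x))
    rw [hpow, norm_pow] at this
    have h2 : ‖S' (n • x)‖ ≤ 1 := hSn _
    nlinarith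
  refine ⟨fun x => φ (S' x), hadd, fun x => ?_, C / ‖φ T'‖, by positivity, fun x c => ?_⟩
  · have h2 : φ (S' x) * φ (S' (-x)) = 1 := by rw [← hadd, add_neg_cancel, h1]
    have h3 : ‖φ (S' x)‖ * ‖φ (S' (-x))‖ = 1 := by rw [← norm_mul, h2, norm_one]
    have := hle x
    have := hle (-x)
    have := norm_nonneg (φ (S' x))
    apply le_antisymm (hle x)
    nlinarith
  · have h2 : (φ (S' x) - c) * φ T' = φ (S' x * T' - c • T') := by
      simp [sub_mul]
    have h3 := hφC (S' x * T' - c • T')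
    rw [← h2, norm_mul] at h3
    rw [div_mul_eq_mul_div, le_div_iff₀ (by positivity)]
    exact h3

section WapsConv

variable {K : Type*} [NormedAddCommGroup K] [CompactSpace K] [MeasurableSpace K] [BorelSpace K]

/-- Convolution of continuous functions on a compact group. -/
noncomputable def wapsConv (μ : Measure K) [IsProbabilityMeasure μ] (a b : C(K, ℂ)) : C(K, ℂ) where
  toFun x := ∫ y, a (x - y) * b y ∂μ
  continuous_toFun := by
    have h := continuous_parametric_integral_of_continuous (μ := μ)
      (f := fun x y => a (x - y) * b y) (by fun_prop) (isCompact_univ (X := K))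
    simpa using h

/-- Translation of a continuous function. -/
noncomputable def wapsTr (s : K) (a : C(K, ℂ)) : C(K, ℂ) := ⟨fun x => a (x + s), by fun_prop⟩

theorem wapsTr_apply (s : K) (a : C(K, ℂ)) (x : K) : wapsTr s a x = a (x + s) := rfl

theorem waps_integrable (μ : Measure K) [IsProbabilityMeasure μ] (f : K → ℂ) (hf : Continuous f) :
    Integrable f μ :=
  hf.integrable_of_hasCompactSupport (HasCompactSupport.of_compactSpace f)

theorem wapsConv_apply (μ : Measure K) [IsProbabilityMeasure μ] (a b : C(K, ℂ)) (x : K) :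
    wapsConv μ a b x = ∫ y, a (x - y) * b y ∂μ := rfl

theorem wapsConv_norm (μ : Measure K) [IsProbabilityMeasure μ] (a b : C(K, ℂ)) :
    ‖wapsConv μ a b‖ ≤ ‖a‖ * ‖b‖ := by
  rw [ContinuousMap.norm_le _ (by positivity)]
  intro x
  rw [wapsConv_apply]
  have := norm_integral_le_of_norm_le_const (μ := μ) (f := fun y => a (x - y) * b y)
    (C := ‖a‖ * ‖b‖) (Eventually.of_forall fun y => by
      rw [norm_mul]
      exact mul_le_mul (a.norm_coe_le_norm _) (b.norm_coe_le_norm _) (norm_nonneg _) (norm_nonneg _))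
  simpa using this

theorem wapsConv_sub_left (μ : Measure K) [IsProbabilityMeasure μ] (a a' b : C(K, ℂ)) :
    wapsConv μ (a - a') b = wapsConv μ a b - wapsConv μ a' b := by
  ext x
  simp only [wapsConv_apply, ContinuousMap.sub_apply, sub_mul]
  exact integral_sub (waps_integrable μ _ (by fun_prop)) (waps_integrable μ _ (by fun_prop))

theorem wapsConv_smul_left (μ : Measure K) [IsProbabilityMeasure μ] (c : ℂ) (a b : C(K, ℂ)) :
    wapsConv μ (c • a) b = c • wapsConv μ a b := by
  ext x
  simp only [wapsConv_apply, ContinuousMap.smul_apply, smul_eq_mul, mul_assoc]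
  exact integral_const_mul _ _

theorem wapsConv_add_right (μ : Measure K) [IsProbabilityMeasure μ] (a b b' : C(K, ℂ)) :
    wapsConv μ a (b + b') = wapsConv μ a b + wapsConv μ a b' := by
  ext x
  simp only [wapsConv_apply, ContinuousMap.add_apply, mul_add]
  exact integral_add (waps_integrable μ _ (by fun_prop)) (waps_integrable μ _ (by fun_prop))

theorem wapsConv_smul_right (μ : Measure K) [IsProbabilityMeasure μ] (c : ℂ) (a b : C(K, ℂ)) :
    wapsConv μ a (c • b) = c • wapsConv μ a b := by
  ext x
  simp only [wapsConv_apply, ContinuousMap.smul_apply, smul_eq_mul, mul_left_comm _ c]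
  exact integral_const_mul _ _

theorem wapsConv_tr_left (μ : Measure K) [IsProbabilityMeasure μ] (s : K) (a b : C(K, ℂ)) :
    wapsConv μ (wapsTr s a) b = wapsTr s (wapsConv μ a b) := by
  ext x
  simp only [wapsConv_apply, wapsTr_apply]
  congr 1; ext y; congr 2; abel

theorem wapsConv_tr_right (μ : Measure K) [IsProbabilityMeasure μ] [μ.IsAddHaarMeasure] (s : K)
    (a b : C(K, ℂ)) : wapsConv μ a (wapsTr s b) = wapsTr s (wapsConv μ a b) := by
  ext x
  simp only [wapsConv_apply, wapsTr_apply]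
  rw [← integral_add_right_eq_self (fun y => a (x + s - y) * b y) s]
  congr 1; ext y; congr 2; abel

/-- The adjoint function. -/
noncomputable def wapsStar (a : C(K, ℂ)) : C(K, ℂ) := ⟨fun x => starRingEnd ℂ (a (-x)), by fun_prop⟩

theorem wapsConv_star (μ : Measure K) [IsProbabilityMeasure μ] [μ.IsAddHaarMeasure]
    (a : C(K, ℂ)) (x : K) :
    wapsConv μ a (wapsStar a) (-x) = starRingEnd ℂ (wapsConv μ a (wapsStar a) x) := by
  simp only [wapsConv_apply, wapsStar, ContinuousMap.coe_mk]
  rw [← integral_conj, ← integral_add_right_eq_self (fun y => starRingEnd ℂ _) x]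
  congr 1; ext y
  simp only [map_mul, Complex.conj_conj]
  rw [mul_comm]; congr 2
  · abel_nf
  · abel_nf

theorem waps_pos (μ : Measure K) [IsProbabilityMeasure μ] [μ.IsAddHaarMeasure]
    (a : C(K, ℂ)) (x : K) (hx : a x ≠ 0) : (∫ y, a y * starRingEnd ℂ (a y) ∂μ) ≠ 0 := by
  have h1 : ∀ y, a y * starRingEnd ℂ (a y) = ((‖a y‖ ^ 2 : ℝ) : ℂ) := by
    intro y; rw [Complex.mul_conj, Complex.normSq_eq_norm_sq]
  simp_rw [h1]
  rw [integral_complex_ofReal]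
  have h2 : 0 < ∫ y, ‖a y‖ ^ 2 ∂μ := by
    refine Continuous.integral_pos_of_hasCompactSupport_nonneg_nonzero (x := x) (by fun_prop)
      (HasCompactSupport.of_compactSpace _) (fun y => by positivity) ?_
    simpa using hx
  exact_mod_cast h2.ne'

theorem waps_char_of_conv (μ : Measure K) [IsProbabilityMeasure μ] [μ.IsAddHaarMeasure]
    (Φ : C(K, ℂ)) (h : ∃ x, Φ x ≠ 0) {G : Type*} [AddCommGroup G] (ι : G →+ K) :
    ∃ ψ : G → ℂ, (∀ x y, ψ (x + y) = ψ x * ψ y) ∧ (∀ x, ‖ψ x‖ = 1) ∧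
      ∃ C > 0, ∀ x (c : ℂ), ‖ψ x - c‖ ≤ C * ‖wapsTr (ι x) Φ - c • Φ‖ := by
  have : SecondCountableTopology K := EMetric.secondCountable_of_sigmaCompact K
  set Ψ := wapsConv μ Φ (wapsStar Φ) with hΨ
  have hΨ0 : Ψ 0 ≠ 0 := by
    obtain ⟨x, hx⟩ := h
    have h1 : Ψ 0 = ∫ y, Φ y * starRingEnd ℂ (Φ y) ∂μ := by
      rw [hΨ, wapsConv_apply]
      rw [← integral_neg_eq_self (fun y => Φ y * starRingEnd ℂ (Φ y))]
      simp [wapsStar]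
    rw [h1]
    exact waps_pos μ Φ x hx
  let T : C(K, ℂ) →L[ℂ] C(K, ℂ) := LinearMap.mkContinuous
    { toFun := wapsConv μ Ψ
      map_add' := wapsConv_add_right μ Ψ
      map_smul' := fun c b => wapsConv_smul_right μ c Ψ b } ‖Ψ‖ (wapsConv_norm μ Ψ)
  have hTa : ∀ f, T f = wapsConv μ Ψ f := fun _ => rfl
  let S : G → C(K, ℂ) →L[ℂ] C(K, ℂ) := fun s => LinearMap.mkContinuous
    { toFun := wapsTr (ι s)
      map_add' := fun _ _ => rfl
      map_smul' := fun _ _ => rfl } 1 (by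
        intro f
        rw [one_mul]
        change ‖wapsTr (ι s) f‖ ≤ ‖f‖
        rw [ContinuousMap.norm_le _ (by positivity)]
        intro x
        exact f.norm_coe_le_norm _)
  have hSa : ∀ s f, S s f = wapsTr (ι s) f := fun _ _ => rfl
  have hlow : ∃ b > 0, ∃ q > 0, ∀ n : ℕ, b * q ^ n ≤ ‖T ^ n‖ := by
    have hJ : ∀ f : C(K, ℂ), (∃ x, f x ≠ 0) → ContinuousMap.toLp 2 μ ℂ f ≠ 0 := by
      rintro f ⟨x, hx⟩ h0
      have := ContinuousMap.inner_toLp (𝕜 := ℂ) μ f f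
      rw [h0] at this
      simp only [inner_zero_left] at this
      exact waps_pos μ f x hx (by simpa using this.symm)
    refine waps_pow_lower (ContinuousMap.toLp 2 μ ℂ) T ?_ Ψ (hJ _ ⟨0, hΨ0⟩) (hJ _ ⟨0, ?_⟩)
    · intro f g
      rw [ContinuousMap.inner_toLp, ContinuousMap.inner_toLp]
      simp only [hTa, wapsConv_apply]
      have e1 : ∀ x, g x * starRingEnd ℂ (∫ y, Ψ (x - y) * f y ∂μ)
          = ∫ y, g x * (starRingEnd ℂ (Ψ (x - y)) * starRingEnd ℂ (f y)) ∂μ := by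
        intro x
        rw [← integral_conj, ← integral_const_mul]
        simp
      have e2 : ∀ y, (∫ x, Ψ (y - x) * g x ∂μ) * starRingEnd ℂ (f y)
          = ∫ x, g x * (starRingEnd ℂ (Ψ (x - y)) * starRingEnd ℂ (f y)) ∂μ := by
        intro y
        rw [← integral_mul_const]
        congr 1; ext x
        have : starRingEnd ℂ (Ψ (x - y)) = Ψ (y - x) := by
          rw [hΨ, ← wapsConv_star]; congr 1; abel
        rw [this]; ring
      simp_rw [e1, e2]
      exact integral_integral_swap_of_hasCompactSupport
        (f := fun x y => g x * (starRingEnd ℂ (Ψ (x - y)) * starRingEnd ℂ (f y)))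
        (by fun_prop) (HasCompactSupport.of_compactSpace _)
    · rw [hTa, wapsConv_apply]
      have h1 : (∫ y, Ψ (0 - y) * Ψ y ∂μ) = ∫ y, Ψ y * starRingEnd ℂ (Ψ y) ∂μ := by
        congr 1; ext y
        rw [zero_sub, hΨ, wapsConv_star, mul_comm]
      rw [h1]
      exact waps_pos μ Ψ 0 hΨ0
  obtain ⟨ψ, h1, h2, C, hC, h3⟩ := waps_exists_char S
    (by ext f x; simp [hSa, wapsTr_apply])
    (by
      intro x y; ext f z
      change wapsTr _ f z = wapsTr _ (wapsTr _ f) z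
      simp only [wapsTr_apply, map_add]; congr 1; abel)
    (fun x => LinearMap.mkContinuous_norm_le _ zero_le_one _) T
    (by
      intro s; ext f z
      change wapsTr (ι s) (wapsConv μ Ψ f) z = wapsConv μ Ψ (wapsTr (ι s) f) z
      rw [wapsConv_tr_right]) hlow
  refine ⟨ψ, h1, h2, C * (‖wapsStar Φ‖ + 1), by positivity, fun x c => (h3 x c).trans ?_⟩
  rw [mul_assoc]
  gcongr
  have h5 : ‖wapsTr (ι x) Ψ - c • Ψ‖ ≤ (‖wapsStar Φ‖ + 1) * ‖wapsTr (ι x) Φ - c • Φ‖ := by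
    rw [hΨ, ← wapsConv_tr_left, ← wapsConv_smul_left, ← wapsConv_sub_left]
    refine (wapsConv_norm _ _ _).trans ?_
    rw [mul_comm]
    gcongr
    linarith
  refine le_trans ?_ h5
  refine ContinuousLinearMap.opNorm_le_bound _ (norm_nonneg _) (fun f => ?_)
  have : (S x * T - c • T) f = wapsConv μ (wapsTr (ι x) Ψ - c • Ψ) f := by
    rw [wapsConv_sub_left, wapsConv_tr_left, wapsConv_smul_left]; rfl
  rw [this]
  exact wapsConv_norm _ _ _

/-- Splitting lemma on the compact group. -/
theorem waps_split (μ : Measure K) [IsProbabilityMeasure μ] [μ.IsAddHaarMeasure]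
    (H₁ H₂ : C(K, ℂ)) (hne : (∫ y, H₁ y * H₂ y ∂μ) ≠ 0) {G : Type*} [AddCommGroup G] (ι : G →+ K)
    (e : G → ℂ) (N₁ N₂ : G → ℝ)
    (h₁ : ∀ s x, ‖H₁ (x + ι s) - H₁ x‖ ≤ N₁ s)
    (h₂ : ∀ s x, ‖H₂ x - e s * H₂ (x + ι s)‖ ≤ N₂ s) :
    ∃ ψ : G → ℂ, (∀ x y, ψ (x + y) = ψ x * ψ y) ∧ (∀ x, ‖ψ x‖ = 1) ∧
      ∃ C > 0, ∀ x, ‖ψ x - 1‖ ≤ C * N₁ x ∧ ‖ψ x - e x‖ ≤ C * N₂ x := by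
  have hN1 : ∀ s, 0 ≤ N₁ s := fun s => (norm_nonneg _).trans (h₁ s 0)
  have hN2 : ∀ s, 0 ≤ N₂ s := fun s => (norm_nonneg _).trans (h₂ s 0)
  let H₂' : C(K, ℂ) := ⟨fun y => H₂ (-y), by fun_prop⟩
  obtain ⟨ψ, p1, p2, C, hC, p3⟩ := waps_char_of_conv μ (wapsConv μ H₁ H₂') ⟨0, by
    rw [wapsConv_apply]
    rw [← integral_neg_eq_self (fun y => H₁ y * H₂ y)] at hne
    simpa [H₂'] using hne⟩ ι
  refine ⟨ψ, p1, p2, C * (‖H₁‖ + ‖H₂'‖ + 1), by positivity, fun s => ⟨?_, ?_⟩⟩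
  · refine (p3 s 1).trans ?_
    rw [mul_assoc]
    gcongr
    rw [one_smul, ← wapsConv_tr_left, ← wapsConv_sub_left]
    refine (wapsConv_norm _ _ _).trans ?_
    rw [mul_comm]
    have : ‖wapsTr (ι s) H₁ - H₁‖ ≤ N₁ s := by
      rw [ContinuousMap.norm_le _ (hN1 s)]
      exact fun x => h₁ s x
    have h0 := norm_nonneg H₁
    gcongr
    linarith
  · refine (p3 s (e s)).trans ?_
    rw [mul_assoc]
    gcongr
    have h5 : wapsTr (ι s) (wapsConv μ H₁ H₂') - e s • wapsConv μ H₁ H₂'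
      = wapsConv μ H₁ (wapsTr (ι s) H₂' + (-(e s)) • H₂') := by
      rw [wapsConv_add_right, wapsConv_smul_right, wapsConv_tr_right]
      module
    rw [h5]
    refine (wapsConv_norm _ _ _).trans ?_
    have : ‖wapsTr (ι s) H₂' + (-(e s)) • H₂'‖ ≤ N₂ s := by
      rw [ContinuousMap.norm_le _ (hN2 s)]
      intro x
      have := h₂ s (-(x + ι s))
      have e3 : -(x + ι s) + ι s = -x := by abel
      rw [e3] at this
      simpa [wapsTr_apply, H₂', sub_eq_add_neg] using this
    have h0 := norm_nonneg H₂'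
    gcongr
    linarith

end WapsConv

theorem waps_dual {G : Type*} [SeminormedAddCommGroup G] (htb : TotallyBounded (Set.univ : Set G))
    (N₁ N₂ : G → ℝ) (hN : ∀ x, ‖x‖ = N₁ x + N₂ x) (hp1 : ∀ x, 0 ≤ N₁ x) (hp2 : ∀ x, 0 ≤ N₂ x)
    (hs1 : ∀ x y, |N₁ (x + y) - N₁ x| ≤ N₁ y) (hs2 : ∀ x y, |N₂ (x + y) - N₂ x| ≤ N₂ y)
    (e : G → ℂ) (he : ∀ x y, e (x + y) = e x * e y) (he1 : ∀ x, ‖e x‖ = 1)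
    (hec : ∀ ε > 0, ∃ δ > 0, ∀ x, ‖x‖ < δ → ‖e x - 1‖ < ε) :
    ∃ ψ : G → ℂ, (∀ x y, ψ (x + y) = ψ x * ψ y) ∧ (∀ x, ‖ψ x‖ = 1) ∧
      ∃ C > 0, ∀ x, ‖ψ x - 1‖ ≤ C * N₁ x ∧ ‖ψ x - e x‖ ≤ C * N₂ x := by
  obtain ⟨δ, hδ, hδe⟩ := hec (1 / 2) (by norm_num)
  let K := UniformSpace.Completion G
  have hdr : DenseRange ((↑) : G → K) := UniformSpace.Completion.denseRange_coe
  have : CompactSpace K := by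
    refine ⟨?_⟩
    have h1 := (htb.image (UniformSpace.Completion.uniformContinuous_coe G)).closure
    rw [Set.image_univ, hdr.closure_range] at h1
    exact h1.isCompact_of_isClosed isClosed_univ
  let _ : MeasurableSpace K := borel K
  have : BorelSpace K := ⟨rfl⟩
  let μ : Measure K := Measure.addHaarMeasure ⊤
  have : IsProbabilityMeasure μ := ⟨by
    have := Measure.addHaarMeasure_self (K₀ := (⊤ : PositiveCompacts K))
    simpa [μ] using this⟩
  have : μ.IsAddHaarMeasure := Measure.isAddHaarMeasure_addHaarMeasure _
  let h : (G → ℝ) → G → ℝ := fun N x => max 0 (1 - 2 / δ * N x)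
  have hlip : ∀ N : G → ℝ, (∀ x y, |N (x + y) - N x| ≤ N y) →
      ∀ x s, |h N (x + s) - h N x| ≤ 2 / δ * N s := by
    intro N hNs x s
    refine (abs_max_sub_max_le_max 0 _ 0 _).trans ?_
    have h0 : |2 / δ * (N x - N (x + s))| ≤ 2 / δ * N s := by
      rw [abs_mul, abs_of_pos (by positivity), abs_sub_comm]
      gcongr
      exact hNs x s
    rw [sub_self, abs_zero, max_eq_right (abs_nonneg _)]
    refine le_trans (le_of_eq ?_) h0
    congr 1; ring
  have huc : ∀ N : G → ℝ, (∀ x y, |N (x + y) - N x| ≤ N y) → (∀ x, N x ≤ ‖x‖) →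
      UniformContinuous (fun x => (h N x : ℂ)) := by
    intro N hNs hNle
    refine Complex.isometry_ofReal.uniformContinuous.comp ?_
    refine (LipschitzWith.of_dist_le_mul (K := ⟨2 / δ, by positivity⟩) fun x y => ?_).uniformContinuous
    have := hlip N hNs y (x - y)
    rw [add_sub_cancel] at this
    rw [Real.dist_eq, dist_eq_norm]
    refine this.trans ?_
    change _ ≤ 2 / δ * _
    gcongr
    exact hNle _
  have hl1 : ∀ x, N₁ x ≤ ‖x‖ := fun x => by rw [hN]; linarith [hp2 x]
  have hl2 : ∀ x, N₂ x ≤ ‖x‖ := fun x => by rw [hN]; linarith [hp1 x]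
  have hu1 := huc N₁ hs1 hl1
  have hu2 := huc N₂ hs2 hl2
  have hue : UniformContinuous e := by
    rw [Metric.uniformContinuous_iff]
    intro ε hε
    obtain ⟨r, hr, hre⟩ := hec ε hε
    refine ⟨r, hr, fun {x y} hxy => ?_⟩
    rw [dist_eq_norm] at hxy ⊢
    have : e x - e y = (e (x - y) - 1) * e y := by
      rw [sub_mul, ← he, sub_add_cancel, one_mul]
    rw [this, norm_mul, he1, mul_one]
    exact hre _ hxy
  let f1 : K → ℂ := UniformSpace.Completion.extension (fun x => (h N₁ x : ℂ))
  let f2 : K → ℂ := UniformSpace.Completion.extension (fun x => (h N₂ x : ℂ))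
  let f3 : K → ℂ := UniformSpace.Completion.extension e
  have c1 : Continuous f1 := UniformSpace.Completion.continuous_extension
  have c2 : Continuous f2 := UniformSpace.Completion.continuous_extension
  have c3 : Continuous f3 := UniformSpace.Completion.continuous_extension
  have v1 : ∀ x : G, f1 x = (h N₁ x : ℂ) := UniformSpace.Completion.extension_coe hu1
  have v2 : ∀ x : G, f2 x = (h N₂ x : ℂ) := UniformSpace.Completion.extension_coe hu2
  have v3 : ∀ x : G, f3 x = e x := UniformSpace.Completion.extension_coe hue
  let H₁ : C(K, ℂ) := ⟨f1, c1⟩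
  let H₂ : C(K, ℂ) := ⟨fun x => f2 x * starRingEnd ℂ (f3 x), by fun_prop⟩
  have hN10 : N₁ 0 = 0 := by
    have := hN 0
    rw [norm_zero] at this
    linarith [hp1 0, hp2 0]
  have hN20 : N₂ 0 = 0 := by
    have := hN 0
    rw [norm_zero] at this
    linarith [hp1 0, hp2 0]
  have he0 : e 0 = 1 := by
    have h1 := he 0 0
    rw [add_zero] at h1
    have h2 : e 0 ≠ 0 := by rw [← norm_ne_zero_iff, he1]; norm_num
    exact mul_left_cancel₀ h2 (by rw [← h1, mul_one])
  have hpos : ∀ x : K, 0 ≤ (H₁ x * H₂ x).re := by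
    intro x
    refine hdr.induction_on (p := fun x => 0 ≤ (H₁ x * H₂ x).re) x
      (isClosed_le continuous_const (by fun_prop)) (fun x => ?_)
    change 0 ≤ (f1 x * (f2 x * starRingEnd ℂ (f3 x))).re
    rw [v1, v2, v3, ← mul_assoc, ← Complex.ofReal_mul, Complex.re_ofReal_mul, Complex.conj_re]
    by_cases hx : ‖x‖ < δ
    · have h1 := (Complex.abs_re_le_norm _).trans (hδe x hx).le
      rw [Complex.sub_re, Complex.one_re, abs_le] at h1
      have h2 : 0 ≤ h N₁ x := le_max_left _ _
      have h3 : 0 ≤ h N₂ x := le_max_left _ _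
      have h4 : 0 ≤ (e x).re := by linarith [h1.1]
      positivity
    · have : h N₁ x * h N₂ x = 0 := by
        rw [hN, not_lt] at hx
        rcases le_or_gt (δ / 2) (N₁ x) with h1 | h1
        · have : h N₁ x = 0 := by
            refine max_eq_left ?_
            rw [sub_nonpos, div_mul_eq_mul_div, le_div_iff₀ hδ]; linarith
          rw [this, zero_mul]
        · have : h N₂ x = 0 := by
            refine max_eq_left ?_
            rw [sub_nonpos, div_mul_eq_mul_div, le_div_iff₀ hδ]; linarith
          rw [this, mul_zero]
      rw [this, zero_mul]
  have hne : (∫ y, H₁ y * H₂ y ∂μ) ≠ 0 := by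
    have h1 : 0 < ∫ y, (H₁ y * H₂ y).re ∂μ := by
      refine Continuous.integral_pos_of_hasCompactSupport_nonneg_nonzero (x := ((0 : G) : K))
        (by fun_prop) (HasCompactSupport.of_compactSpace _) hpos ?_
      change (f1 ((0 : G) : K) * (f2 ((0 : G) : K) * starRingEnd ℂ (f3 ((0 : G) : K)))).re ≠ 0
      rw [v1, v2, v3, he0]
      simp [h, hN10, hN20]
    have h2 : (∫ y, (H₁ y * H₂ y).re ∂μ) = (∫ y, H₁ y * H₂ y ∂μ).re :=
      integral_re (waps_integrable μ (fun y => H₁ y * H₂ y) (by fun_prop))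
    intro h0
    rw [h2, h0] at h1
    simp at h1
  obtain ⟨ψ, p1, p2, C, hC, p3⟩ := waps_split μ H₁ H₂ hne
    (UniformSpace.Completion.toCompl (α := G)) e
    (fun s => 2 / δ * N₁ s) (fun s => 2 / δ * N₂ s)
    (by
      intro s x
      refine hdr.induction_on
        (p := fun x : K => ‖H₁ (x + UniformSpace.Completion.toCompl s) - H₁ x‖ ≤ 2 / δ * N₁ s) x
        (isClosed_le (by fun_prop) continuous_const) (fun x => ?_)
      change ‖f1 ((x : K) + (s : K)) - f1 x‖ ≤ _
      rw [← UniformSpace.Completion.coe_add, v1, v1, ← Complex.ofReal_sub, Complex.norm_real]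
      exact hlip N₁ hs1 x s)
    (by
      intro s x
      refine hdr.induction_on
        (p := fun x : K => ‖H₂ x - e s * H₂ (x + UniformSpace.Completion.toCompl s)‖ ≤ 2 / δ * N₂ s) x
        (isClosed_le (by fun_prop) continuous_const) (fun x => ?_)
      change ‖f2 x * starRingEnd ℂ (f3 x)
        - e s * (f2 ((x : K) + (s : K)) * starRingEnd ℂ (f3 ((x : K) + (s : K))))‖ ≤ _
      rw [← UniformSpace.Completion.coe_add, v2, v2, v3, v3, he, map_mul]
      have h1 : e s * starRingEnd ℂ (e s) = 1 := by
        rw [Complex.mul_conj, Complex.normSq_eq_norm_sq, he1]; simp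
      have h2 : (h N₂ x : ℂ) * starRingEnd ℂ (e x)
          - e s * ((h N₂ (x + s) : ℂ) * (starRingEnd ℂ (e x) * starRingEnd ℂ (e s)))
          = -((h N₂ (x + s) - h N₂ x : ℝ) : ℂ) * starRingEnd ℂ (e x) := by
        push_cast
        linear_combination (-(h N₂ (x + s) : ℂ) * starRingEnd ℂ (e x)) * h1
      rw [h2, norm_mul, norm_neg, Complex.norm_real, RCLike.norm_conj, he1, mul_one]
      exact hlip N₂ hs2 x s)
  refine ⟨ψ, p1, p2, C * (2 / δ), by positivity, fun x => ?_⟩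
  simpa only [mul_assoc] using p3 x

theorem waps_char_real (ψ : ℝ → ℂ) (hadd : ∀ x y, ψ (x + y) = ψ x * ψ y) (h1 : ∀ x, ‖ψ x‖ = 1)
    (hc : ∀ ε > 0, ∃ δ > 0, ∀ x, |x| < δ → ‖ψ x - 1‖ < ε) :
    ∃ lam : ℝ, ∀ x, ψ x = Complex.exp (Complex.I * ((lam * x : ℝ) : ℂ)) := by
  have hψ0 : ψ 0 = 1 := by
    have h2 := hadd 0 0
    rw [add_zero] at h2
    have h3 : ψ 0 ≠ 0 := by rw [← norm_ne_zero_iff, h1]; norm_num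
    exact mul_left_cancel₀ h3 (by rw [← h2, mul_one])
  have hcont : Continuous ψ := by
    rw [Metric.continuous_iff]
    intro y ε hε
    obtain ⟨δ, hδ, h⟩ := hc ε hε
    refine ⟨δ, hδ, fun x hx => ?_⟩
    have : ψ x - ψ y = (ψ (x - y) - 1) * ψ y := by
      rw [sub_mul, ← hadd, sub_add_cancel, one_mul]
    rw [dist_eq_norm, this, norm_mul, h1, mul_one]
    exact h _ (by simpa [Real.dist_eq] using hx)
  have hii : ∀ a b, IntervalIntegrable ψ volume a b := fun a b => hcont.intervalIntegrable a b
  -- a primitive is nonzero somewhere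
  let P : ℝ → ℂ := fun x => ∫ t in (0 : ℝ)..x, ψ t
  have hP : ∀ x, HasDerivAt P (ψ x) x := fun x =>
    intervalIntegral.integral_hasDerivAt_right (hii _ _)
      (hcont.stronglyMeasurableAtFilter _ _) hcont.continuousAt
  obtain ⟨a, ha⟩ : ∃ a, P a ≠ 0 := by
    by_contra! h
    have h2 : P = fun _ => 0 := funext h
    have h3 := hP 0
    rw [h2, hψ0] at h3
    have := h3.unique (hasDerivAt_const _ _)
    norm_num at this
  have hfe : ∀ x, ψ x = (P (x + a) - P x) / P a := by
    intro x
    rw [eq_div_iff ha]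
    change ψ x * (∫ t in (0 : ℝ)..a, ψ t) = _
    rw [← intervalIntegral.integral_const_mul]
    simp_rw [← hadd]
    rw [intervalIntegral.integral_comp_add_left (fun t => ψ t) x]
    change _ = (∫ t in (0 : ℝ)..(x + a), ψ t) - ∫ t in (0 : ℝ)..x, ψ t
    rw [intervalIntegral.integral_interval_sub_left (hii _ _) (hii _ _), add_zero]
  let b : ℂ := (ψ a - 1) / P a
  have hd : ∀ x, HasDerivAt ψ (b * ψ x) x := by
    intro x
    have h2 : HasDerivAt (fun x => (P (x + a) - P x) / P a) ((ψ (x + a) - ψ x) / P a) x :=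
      (((hP (x + a)).comp_add_const x a).sub (hP x)).div_const _
    rw [← funext hfe] at h2
    convert h2 using 1
    rw [hadd]; simp only [b]; ring
  have hexp : ∀ x, ψ x = Complex.exp (b * x) := by
    have h2 : ∀ x : ℝ, HasDerivAt (fun x : ℝ => ψ x * Complex.exp (-(b * x))) 0 x := by
      intro x
      have h3 : HasDerivAt (fun x : ℝ => Complex.exp (-(b * x))) (Complex.exp (-(b * x)) * (-(b * 1))) x := by
        exact (((Complex.ofRealCLM.hasDerivAt (x := x)).const_mul b).neg).cexp
      have h4 := (hd x).mul h3
      have h6 : b * ψ x * Complex.exp (-(b * x)) + ψ x * (Complex.exp (-(b * x)) * (-(b * 1))) = 0 := by ring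
      rw [h6] at h4
      exact h4
    intro x
    have h5 := is_const_of_deriv_eq_zero (f := fun x : ℝ => ψ x * Complex.exp (-(b * x)))
      (fun x => (h2 x).differentiableAt) (fun x => (h2 x).deriv) x 0
    simp only [hψ0, Complex.ofReal_zero, mul_zero, neg_zero, Complex.exp_zero, mul_one] at h5
    rw [Complex.exp_neg] at h5
    field_simp [Complex.exp_ne_zero] at h5
    exact h5
  have hre : b.re = 0 := by
    have h2 := h1 1
    rw [hexp 1, Complex.norm_exp] at h2
    simpa using h2
  refine ⟨b.im, fun x => ?_⟩
  rw [hexp x]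
  congr 1
  apply Complex.ext <;> simp [hre]

/-- Supremum of the averages of `φ` over windows of length `l`. -/
noncomputable def wapsA (l : ℝ) (φ : ℝ → ℝ≥0∞) : ℝ≥0∞ :=
  ⨆ ξ : ℝ, ENNReal.ofReal (1 / l) * ∫⁻ t in Set.Icc ξ (ξ + l), φ t

/-- The cost of the translation by `τ`. -/
noncomputable def wapsC {α : Type*} (d : α → α → ℝ) (w : ℝ → α) (τ t : ℝ) : ℝ≥0∞ :=
  ENNReal.ofReal (d (w t) (w (t + τ)))

theorem waps_weylD {α : Type*} (d : α → α → ℝ) (l τ : ℝ) (f : ℝ → α) :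
    weylD d 1 l f (fun t => f (t + τ)) = wapsA l (wapsC d f τ) := by
  simp [weylD, wapsA, wapsC]

theorem wapsA_mono {l : ℝ} {φ ψ : ℝ → ℝ≥0∞} (h : ∀ᵐ t, φ t ≤ ψ t) : wapsA l φ ≤ wapsA l ψ := by
  refine iSup_mono fun ξ => ?_
  exact mul_le_mul' le_rfl (lintegral_mono_ae (ae_restrict_of_ae h))

theorem wapsA_congr {l : ℝ} {φ ψ : ℝ → ℝ≥0∞} (h : ∀ᵐ t, φ t = ψ t) : wapsA l φ = wapsA l ψ :=
  le_antisymm (wapsA_mono (h.mono fun _ h => h.le)) (wapsA_mono (h.mono fun _ h => h.ge))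

theorem waps_win_le (l : ℝ) (φ : ℝ → ℝ≥0∞) (ξ : ℝ) :
    ENNReal.ofReal (1 / l) * ∫⁻ t in Set.Icc ξ (ξ + l), φ t ≤ wapsA l φ :=
  le_iSup (fun ξ : ℝ => ENNReal.ofReal (1 / l) * ∫⁻ t in Set.Icc ξ (ξ + l), φ t) ξ

theorem wapsA_add {l : ℝ} {φ ψ : ℝ → ℝ≥0∞} (h : AEMeasurable φ) :
    wapsA l (fun t => φ t + ψ t) ≤ wapsA l φ + wapsA l ψ := by
  refine iSup_le fun ξ => ?_
  rw [lintegral_add_left' h.restrict, mul_add]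
  exact add_le_add (waps_win_le _ _ _) (waps_win_le _ _ _)

theorem wapsA_const_mul {l : ℝ} {φ : ℝ → ℝ≥0∞} {c : ℝ≥0∞} (hc : c ≠ ∞) :
    wapsA l (fun t => c * φ t) = c * wapsA l φ := by
  unfold wapsA
  rw [ENNReal.mul_iSup]
  congr 1; ext ξ
  rw [lintegral_const_mul' _ _ hc]; ring

theorem waps_ofReal_inv_mul {l : ℝ} (hl : 0 < l) : ENNReal.ofReal (1 / l) * ENNReal.ofReal l = 1 := by
  rw [← ENNReal.ofReal_mul (by positivity), one_div, inv_mul_cancel₀ hl.ne', ENNReal.ofReal_one]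

theorem wapsA_const {l : ℝ} (hl : 0 < l) (c : ℝ≥0∞) : wapsA l (fun _ => c) = c := by
  have : ∀ ξ : ℝ, ENNReal.ofReal (1 / l) * ∫⁻ _ in Set.Icc ξ (ξ + l), c = c := by
    intro ξ
    rw [setLIntegral_const, Real.volume_Icc, add_sub_cancel_left, mul_comm c, ← mul_assoc,
      waps_ofReal_inv_mul hl, one_mul]
  simp only [wapsA, this]
  exact ciSup_const

theorem waps_win_le' {l : ℝ} (hl : 0 < l) (φ : ℝ → ℝ≥0∞) (ξ : ℝ) :
    ∫⁻ t in Set.Icc ξ (ξ + l), φ t ≤ ENNReal.ofReal l * wapsA l φ := by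
  calc ∫⁻ t in Set.Icc ξ (ξ + l), φ t
      = ENNReal.ofReal l * (ENNReal.ofReal (1 / l) * ∫⁻ t in Set.Icc ξ (ξ + l), φ t) := by
        rw [← mul_assoc, mul_comm (ENNReal.ofReal l), waps_ofReal_inv_mul hl, one_mul]
    _ ≤ _ := by gcongr; exact waps_win_le _ _ _

theorem waps_setlint_shift (φ : ℝ → ℝ≥0∞) (τ a b : ℝ) :
    ∫⁻ t in Set.Icc a b, φ (t + τ) = ∫⁻ t in Set.Icc (a + τ) (b + τ), φ t := by
  have := (measurePreserving_add_right (volume : Measure ℝ) τ).setLIntegral_comp_preimage_emb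
    (measurableEmbedding_addRight τ) φ (Set.Icc (a + τ) (b + τ))
  rw [← this]
  congr 2
  ext x; simp

theorem wapsA_shift (l τ : ℝ) (φ : ℝ → ℝ≥0∞) : wapsA l (fun t => φ (t + τ)) = wapsA l φ := by
  have h : ∀ τ : ℝ, ∀ φ : ℝ → ℝ≥0∞, wapsA l (fun t => φ (t + τ)) ≤ wapsA l φ := by
    intro τ φ
    refine iSup_le fun ξ => ?_
    rw [waps_setlint_shift, show ξ + l + τ = (ξ + τ) + l by ring]
    exact waps_win_le _ _ _
  refine le_antisymm (h τ φ) ?_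
  have := h (-τ) (fun t => φ (t + τ))
  simpa using this

theorem wapsA_long {l L : ℝ} (hl : 0 < l) (hL : l ≤ L) (φ : ℝ → ℝ≥0∞) :
    wapsA L φ ≤ 2 * wapsA l φ := by
  have hL0 : 0 < L := hl.trans_le hL
  refine iSup_le fun ξ => ?_
  set n := ⌈L / l⌉₊ with hn
  have hn1 : L / l ≤ n := Nat.le_ceil _
  have hn2 : (n : ℝ) ≤ 2 * (L / l) := by
    have h1 := (Nat.ceil_lt_add_one (show 0 ≤ L / l by positivity)).le
    have h2 : 1 ≤ L / l := by rw [le_div_iff₀ hl]; linarith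
    linarith
  have hcov : ∀ m : ℕ, ∫⁻ t in Set.Icc ξ (ξ + m * l), φ t ≤ m * (ENNReal.ofReal l * wapsA l φ) := by
    intro m
    induction m with
    | zero => simp
    | succ m ih =>
      have hsub : Set.Icc ξ (ξ + (m + 1 : ℕ) * l) ⊆
          Set.Icc ξ (ξ + m * l) ∪ Set.Icc (ξ + m * l) (ξ + m * l + l) := by
        intro x hx
        rcases le_total x (ξ + m * l) with h | h
        · exact Or.inl ⟨hx.1, h⟩
        · refine Or.inr ⟨h, ?_⟩
          have := hx.2; push_cast at this; linarith
      refine (lintegral_mono_set hsub).trans ((lintegral_union_le _ _ _).trans ?_)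
      push_cast
      rw [add_mul, one_mul]
      exact add_le_add ih (waps_win_le' hl _ _)
  have hsub : Set.Icc ξ (ξ + L) ⊆ Set.Icc ξ (ξ + n * l) := by
    refine Set.Icc_subset_Icc_right ?_
    rw [div_le_iff₀ hl] at hn1; linarith
  calc ENNReal.ofReal (1 / L) * ∫⁻ t in Set.Icc ξ (ξ + L), φ t
      ≤ ENNReal.ofReal (1 / L) * (n * (ENNReal.ofReal l * wapsA l φ)) := by
        gcongr; exact (lintegral_mono_set hsub).trans (hcov n)
    _ = ENNReal.ofReal (1 / L * n * l) * wapsA l φ := by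
        rw [ENNReal.ofReal_mul (by positivity), ENNReal.ofReal_mul (by positivity),
          ENNReal.ofReal_natCast]; ring
    _ ≤ 2 * wapsA l φ := by
        gcongr
        rw [show (2 : ℝ≥0∞) = ENNReal.ofReal 2 by simp]
        apply ENNReal.ofReal_le_ofReal
        calc 1 / L * n * l ≤ 1 / L * (2 * (L / l)) * l := by gcongr
          _ = 2 := by field_simp

/-- A bounded continuous distance. -/
structure WapsDist {α : Type*} [TopologicalSpace α] (d : α → α → ℝ) : Prop where
  nonneg : ∀ x y, 0 ≤ d x y
  le_one : ∀ x y, d x y ≤ 1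
  self : ∀ x, d x x = 0
  symm : ∀ x y, d x y = d y x
  tri : ∀ x y z, d x z ≤ d x y + d y z
  cont : Continuous fun p : α × α => d p.1 p.2

theorem waps_aesm_shift {α : Type*} [TopologicalSpace α] {w : ℝ → α}
    (hw : AEStronglyMeasurable w) (τ : ℝ) : AEStronglyMeasurable (fun t => w (t + τ)) :=
  hw.comp_measurePreserving (measurePreserving_add_right (volume : Measure ℝ) τ)

theorem waps_ae_shift {P : ℝ → Prop} (h : ∀ᵐ t, P t) (τ : ℝ) : ∀ᵐ t, P (t + τ) :=
  (measurePreserving_add_right (volume : Measure ℝ) τ).quasiMeasurePreserving.ae h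

theorem waps_aesm_d {α : Type*} [TopologicalSpace α] {d : α → α → ℝ} (hd : WapsDist d)
    {v w : ℝ → α} (hv : AEStronglyMeasurable v)
    (hw : AEStronglyMeasurable w) : AEMeasurable (fun t => ENNReal.ofReal (d (v t) (w t))) :=
  (hd.cont.comp_aestronglyMeasurable (hv.prodMk hw)).aemeasurable.ennreal_ofReal

theorem wapsC_meas {α : Type*} [TopologicalSpace α] {d : α → α → ℝ} (hd : WapsDist d)
    {w : ℝ → α} (hw : AEStronglyMeasurable w) (τ : ℝ) : AEMeasurable (wapsC d w τ) :=
  waps_aesm_d hd hw (waps_aesm_shift hw τ)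

theorem wapsC_le_one {α : Type*} [TopologicalSpace α] {d : α → α → ℝ} (hd : WapsDist d)
    (w : ℝ → α) (τ t : ℝ) : wapsC d w τ t ≤ 1 := by
  rw [← ENNReal.ofReal_one]; exact ENNReal.ofReal_le_ofReal (hd.le_one _ _)

theorem wapsAC_le_one {α : Type*} [TopologicalSpace α] {d : α → α → ℝ} (hd : WapsDist d)
    (w : ℝ → α) {l : ℝ} (hl : 0 < l) (τ : ℝ) : wapsA l (wapsC d w τ) ≤ 1 :=
  (wapsA_mono (ae_of_all _ fun t => wapsC_le_one hd w τ t)).trans (wapsA_const hl 1).le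

theorem wapsAC_add {α : Type*} [TopologicalSpace α] {d : α → α → ℝ} (hd : WapsDist d)
    {w : ℝ → α} (hw : AEStronglyMeasurable w) (l σ τ : ℝ) :
    wapsA l (wapsC d w (σ + τ)) ≤ wapsA l (wapsC d w σ) + wapsA l (wapsC d w τ) := by
  rw [← wapsA_shift l σ (wapsC d w τ)]
  refine le_trans (wapsA_mono (ae_of_all _ fun t => ?_)) (wapsA_add (wapsC_meas hd hw σ))
  simp only [wapsC]
  rw [← ENNReal.ofReal_add (hd.nonneg _ _) (hd.nonneg _ _), ← add_assoc]
  exact ENNReal.ofReal_le_ofReal (hd.tri _ _ _)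

theorem wapsAC_neg {α : Type*} [TopologicalSpace α] {d : α → α → ℝ} (hd : WapsDist d)
    (w : ℝ → α) (l τ : ℝ) :
    wapsA l (wapsC d w (-τ)) = wapsA l (wapsC d w τ) := by
  rw [← wapsA_shift l τ (wapsC d w (-τ))]
  congr 1; ext t
  simp only [wapsC, add_neg_cancel_right]
  rw [hd.symm]

theorem wapsAC_zero {α : Type*} [TopologicalSpace α] {d : α → α → ℝ} (hd : WapsDist d)
    (w : ℝ → α) (l : ℝ) : wapsA l (wapsC d w 0) = 0 := by
  simp [wapsA, wapsC, hd.self]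

/-- Weyl almost periodicity, `ℝ≥0∞` version. -/
def WapsAP {α : Type*} (d : α → α → ℝ) (w : ℝ → α) : Prop :=
  ∀ ε : ℝ≥0∞, 0 < ε → ∃ l > 0, RelDense {τ | wapsA l (wapsC d w τ) < ε}

theorem RelDense.waps_mono {S T : Set ℝ} (h : RelDense S) (hST : S ⊆ T) : RelDense T := by
  obtain ⟨a, ha, h⟩ := h
  exact ⟨a, ha, fun ξ => (h ξ).mono (Set.inter_subset_inter_right _ hST)⟩

theorem waps_exists_real {ε : ℝ≥0∞} (hε : 0 < ε) : ∃ r : ℝ, 0 < r ∧ ENNReal.ofReal r ≤ ε := by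
  by_cases h : ε = ∞
  · exact ⟨1, one_pos, by simp [h]⟩
  · exact ⟨ε.toReal, ENNReal.toReal_pos hε.ne' h, by rw [ENNReal.ofReal_toReal h]⟩

theorem waps_memWp_ap {α : Type*} [TopologicalSpace α] {d : α → α → ℝ} {x₀ : α} {w : ℝ → α}
    (h : MemWp d 1 x₀ w) : WapsAP d w := by
  intro ε hε
  obtain ⟨r, hr, hrε⟩ := waps_exists_real hε
  obtain ⟨l, hl, hd⟩ := h.2 r hr
  refine ⟨l, hl, hd.waps_mono fun τ hτ => ?_⟩
  simp only [APeriodsL, waps_weylD, Set.mem_ofPred_eq] at hτ ⊢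
  exact hτ.trans_le hrε

theorem waps_memWp_of {α : Type*} [TopologicalSpace α] {d : α → α → ℝ} (hd : WapsDist d) {x₀ : α}
    {w : ℝ → α} (hm : AEStronglyMeasurable w) (h : WapsAP d w) : MemWp d 1 x₀ w := by
  refine ⟨⟨hm, 1, fun ξ => ?_⟩, fun ε hε => ?_⟩
  · refine (lintegral_mono (g := fun _ => 1) fun t => ?_).trans ?_
    · simp only [Real.rpow_one]
      rw [← ENNReal.ofReal_one]; exact ENNReal.ofReal_le_ofReal (hd.le_one _ _)
    · simp
  · obtain ⟨l, hl, hr⟩ := h (ENNReal.ofReal ε) (by simpa using hε)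
    refine ⟨l, hl, hr.waps_mono fun τ hτ => ?_⟩
    simpa only [APeriodsL, waps_weylD, Set.mem_ofPred_eq] using hτ

theorem wapsAP_congr {α : Type*} {d : α → α → ℝ} {v w : ℝ → α} (h : v =ᵐ[volume] w)
    (hv : WapsAP d v) : WapsAP d w := by
  intro ε hε
  obtain ⟨l, hl, hr⟩ := hv ε hε
  refine ⟨l, hl, hr.waps_mono fun τ hτ => ?_⟩
  simp only [Set.mem_ofPred_eq] at hτ ⊢
  refine lt_of_le_of_lt (wapsA_mono ?_) hτ
  filter_upwards [h, waps_ae_shift h τ] with t h1 h2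
  simp [wapsC, h1, h2]

theorem waps_half {ε : ℝ≥0∞} (h : 0 < ε) : 0 < ε / 2 := ENNReal.half_pos h.ne'

theorem waps_two_mul_half {ε x : ℝ≥0∞} (h : x < ε / 2) : 2 * x < ε := by
  rcases eq_or_ne ε ∞ with rfl | hε
  · rw [ENNReal.top_div_of_ne_top (by simp)] at h
    exact ENNReal.mul_lt_top (by simp) h
  calc 2 * x = x + x := two_mul x
    _ < ε / 2 + ε / 2 := ENNReal.add_lt_add h h
    _ = ε := ENNReal.add_halves ε

theorem waps_jj (N₁ N₂ : ℝ → ℝ≥0∞) (ha1 : ∀ x y, N₁ (x + y) ≤ N₁ x + N₁ y)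
    (ha2 : ∀ x y, N₂ (x + y) ≤ N₂ x + N₂ y) (hn1 : ∀ x, N₁ (-x) = N₁ x)
    (hn2 : ∀ x, N₂ (-x) = N₂ x) (ε : ℝ≥0∞) (h1 : RelDense {x | N₁ x < ε})
    (h2 : RelDense {x | N₂ x < ε}) {r : ℝ} (hr : 0 < r) (h3 : ∀ s, |s| ≤ r → N₂ s < ε) :
    RelDense {x | N₁ x < ε + ε ∧ N₂ x < ε + ε + ε} := by
  obtain ⟨a, ha, h1⟩ := h1
  obtain ⟨b, hb, h2⟩ := h2
  choose τ hτ1 hτ2 using h1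
  choose σ hσ1 hσ2 using h2
  set c := a + b with hc
  let cell : ℝ → ℤ := fun x => ⌊(τ x - σ x) / r⌋
  have hfin : (Set.range cell).Finite := by
    refine (Set.finite_Icc ⌊-c / r⌋ ⌊c / r⌋).subset ?_
    rintro _ ⟨x, rfl⟩
    have := hτ1 x
    have := hσ1 x
    simp only [Set.mem_Icc] at *
    constructor <;> refine Int.floor_le_floor ?_ <;> gcongr <;> linarith
  -- representatives
  let rep : ℝ → ℝ := fun x => Classical.choose (show ∃ y, cell y = cell x from ⟨x, rfl⟩)
  have hrep : ∀ x, cell (rep x) = cell x :=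
    fun x => Classical.choose_spec (show ∃ y, cell y = cell x from ⟨x, rfl⟩)
  have hrep' : ∀ x y, cell x = cell y → rep x = rep y := by
    intro x y h; simp only [rep, h]
  have hfin2 : (Set.range fun x => |τ (rep x)|).Finite := by
    choose! g hg using (show ∀ j ∈ Set.range cell, ∃ x, cell x = j from fun j h => h)
    refine (hfin.image fun j => |τ (rep (g j))|).subset ?_
    rintro _ ⟨x, rfl⟩
    refine ⟨cell x, ⟨x, rfl⟩, ?_⟩
    simp only
    rw [hrep' _ _ (hg (cell x) ⟨x, rfl⟩)]
  obtain ⟨M, hM⟩ := hfin2.bddAbove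
  have hM' : ∀ x, |τ (rep x)| ≤ M := fun x => hM ⟨x, rfl⟩
  have hM0 : 0 ≤ M := (abs_nonneg _).trans (hM' 0)
  refine ⟨a + 2 * M, by positivity, fun ξ => ?_⟩
  set x := ξ + M with hx
  set y := rep x with hy
  have hxy := hrep x
  refine ⟨τ x - τ y, ?_, ?_, ?_⟩
  · have := hτ1 x
    have := abs_le.1 (hM' x)
    simp only [Set.mem_Icc] at *
    constructor <;> linarith
  · calc N₁ (τ x - τ y) = N₁ (τ x + -τ y) := by rw [sub_eq_add_neg]
      _ ≤ N₁ (τ x) + N₁ (τ y) := by rw [← hn1 (τ y)]; exact ha1 _ _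
      _ < ε + ε := ENNReal.add_lt_add (hτ2 x) (hτ2 y)
  · have hs : |(τ x - σ x) - (τ y - σ y)| ≤ r := by
      have h := Int.abs_sub_lt_one_of_floor_eq_floor hxy
      rw [← sub_div, abs_div, abs_of_pos hr, div_lt_one hr, abs_sub_comm] at h
      exact h.le
    calc N₂ (τ x - τ y) = N₂ ((σ x + -σ y) + ((τ x - σ x) - (τ y - σ y))) := by congr 1; ring
      _ ≤ N₂ (σ x) + N₂ (σ y) + N₂ ((τ x - σ x) - (τ y - σ y)) := by
        refine (ha2 _ _).trans (add_le_add ?_ le_rfl)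
        rw [← hn2 (σ y)]; exact ha2 _ _
      _ < ε + ε + ε := ENNReal.add_lt_add (ENNReal.add_lt_add (hσ2 x) (hσ2 y)) (h3 _ hs)

theorem waps_lint_shift_tendsto {α : Type*} [TopologicalSpace α] {d : α → α → ℝ} (hd : WapsDist d)
    (v : SimpleFunc ℝ α) (b : ℝ) :
    Tendsto (fun s => ∫⁻ t in Set.Icc 0 b, wapsC d v s t) (𝓝 0) (𝓝 0) := by
  classical
  have hI : ∀ y ∈ v.range, Tendsto (fun s => volume (symmDiff
      ((fun t => t + s) ⁻¹' (v ⁻¹' {y} ∩ Set.Icc (-1) (b + 1)))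
        (v ⁻¹' {y} ∩ Set.Icc (-1) (b + 1)))) (𝓝 (0 : ℝ)) (𝓝 0) := by
    intro y _
    let f : ℝ → C(ℝ, ℝ) := fun s => ⟨fun t => t + s, by fun_prop⟩
    have hf : Continuous f := ContinuousMap.continuous_of_continuous_uncurry _ (by
      change Continuous fun p : ℝ × ℝ => p.2 + p.1
      fun_prop)
    have h := tendsto_measure_symmDiff_preimage_nhds_zero (μ := (volume : Measure ℝ))
      (ν := (volume : Measure ℝ)) (f := f) (l := 𝓝 0) (g := f 0)
      (s := v ⁻¹' {y} ∩ Set.Icc (-1) (b + 1)) (hf.tendsto 0)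
      (Eventually.of_forall fun s => measurePreserving_add_right _ s)
      (measurePreserving_add_right _ 0)
      ((v.measurableSet_preimage _).inter measurableSet_Icc).nullMeasurableSet
      (ne_top_of_le_ne_top (by simp) (measure_mono (Set.inter_subset_right)))
    refine h.congr fun s => ?_
    congr 2
    ext t; simp [f]
  have hsum := tendsto_finsetSum v.range hI
  rw [Finset.sum_const_zero] at hsum
  refine tendsto_of_tendsto_of_tendsto_of_le_of_le' tendsto_const_nhds hsum
    (Eventually.of_forall fun _ => zero_le) ?_
  filter_upwards [Metric.closedBall_mem_nhds (0 : ℝ) one_pos] with s hs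
  rw [mem_closedBall_zero_iff, Real.norm_eq_abs, abs_le] at hs
  have hms : ∀ y : α, MeasurableSet (symmDiff
      ((fun t => t + s) ⁻¹' (v ⁻¹' {y} ∩ Set.Icc (-1) (b + 1)))
        (v ⁻¹' {y} ∩ Set.Icc (-1) (b + 1))) := by
    intro y
    have h1 := ((v.measurableSet_preimage {y}).inter
      (measurableSet_Icc (a := (-1 : ℝ)) (b := b + 1)))
    exact (measurable_add_const s h1).symmDiff h1
  calc ∫⁻ t in Set.Icc 0 b, wapsC d v s t
      ≤ ∫⁻ t in Set.Icc 0 b, ∑ y ∈ v.range, (symmDiff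
      ((fun t => t + s) ⁻¹' (v ⁻¹' {y} ∩ Set.Icc (-1) (b + 1)))
        (v ⁻¹' {y} ∩ Set.Icc (-1) (b + 1))).indicator 1 t := by
        refine setLIntegral_mono' measurableSet_Icc fun t ht => ?_
        by_cases hvt : v t = v (t + s)
        · simp [wapsC, ← hvt, hd.self]
        · refine (wapsC_le_one hd _ _ _).trans ?_
          refine le_trans ?_ (Finset.single_le_sum (fun _ _ => zero_le)
            (SimpleFunc.mem_range_self v t))
          rw [Set.indicator_of_mem]
          · rfl
          · refine Or.inr ⟨⟨rfl, ?_, ?_⟩, ?_⟩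
            · linarith [ht.1]
            · linarith [ht.2]
            · exact fun h => hvt (Eq.symm h.1)
    _ ≤ ∫⁻ t, ∑ y ∈ v.range, (symmDiff
      ((fun t => t + s) ⁻¹' (v ⁻¹' {y} ∩ Set.Icc (-1) (b + 1)))
        (v ⁻¹' {y} ∩ Set.Icc (-1) (b + 1))).indicator 1 t := setLIntegral_le_lintegral _ _
    _ = _ := by
        rw [lintegral_finsetSum _ fun y _ => measurable_one.indicator (hms y)]
        refine Finset.sum_congr rfl fun y _ => ?_
        rw [lintegral_indicator_one (hms y)]

theorem waps_local_cont {α : Type*} [TopologicalSpace α] {d : α → α → ℝ} (hd : WapsDist d)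
    {w : ℝ → α} (hw : AEStronglyMeasurable w) (b : ℝ) :
    Tendsto (fun s => ∫⁻ t in Set.Icc 0 b, wapsC d w s t) (𝓝 0) (𝓝 0) := by
  obtain ⟨w', hw', hww'⟩ := hw
  have h1 : ∀ᵐ t, Tendsto (fun n => ENNReal.ofReal (d (w t) (hw'.approx n t))) atTop (𝓝 0) := by
    filter_upwards [hww'] with t ht
    rw [ht]
    have h2 := (hd.cont.tendsto (w' t, w' t)).comp
      ((tendsto_const_nhds (x := w' t)).prodMk_nhds (hw'.tendsto_approx t))
    simp only [hd.self] at h2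
    have := ENNReal.tendsto_ofReal h2
    simpa using this
  have hmeas : ∀ n, AEMeasurable (fun t => ENNReal.ofReal (d (w t) (hw'.approx n t))) := fun n =>
    waps_aesm_d hd ⟨w', hw', hww'⟩ (hw'.approx n).stronglyMeasurable.aestronglyMeasurable
  have h2 : Tendsto (fun n => ∫⁻ t in Set.Icc (-1) (b + 1), ENNReal.ofReal (d (w t) (hw'.approx n t)))
      atTop (𝓝 0) := by
    have := tendsto_lintegral_of_dominated_convergence'
      (μ := volume.restrict (Set.Icc (-1) (b + 1)))
      (F := fun n t => ENNReal.ofReal (d (w t) (hw'.approx n t))) (f := fun _ => 0)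
      (fun _ => 1) (fun n => (hmeas n).restrict)
      (fun n => ae_of_all _ fun t => by
        rw [← ENNReal.ofReal_one]; exact ENNReal.ofReal_le_ofReal (hd.le_one _ _))
      (by simp) (ae_restrict_of_ae h1)
    simpa using this
  rw [ENNReal.tendsto_nhds_zero]
  intro ε hε
  obtain ⟨n, hn⟩ := ((ENNReal.tendsto_nhds_zero.1 h2) (ε / 2 / 2) (waps_half (waps_half hε))).exists
  set v := hw'.approx n
  filter_upwards [(ENNReal.tendsto_nhds_zero.1 (waps_lint_shift_tendsto hd v b)) (ε / 2)
    (waps_half hε), Metric.closedBall_mem_nhds (0 : ℝ) one_pos] with s hs1 hs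
  rw [mem_closedBall_zero_iff, Real.norm_eq_abs, abs_le] at hs
  have hvm : AEStronglyMeasurable v := v.stronglyMeasurable.aestronglyMeasurable
  calc ∫⁻ t in Set.Icc 0 b, wapsC d w s t
      ≤ ∫⁻ t in Set.Icc 0 b, (ENNReal.ofReal (d (w t) (v t)) + (fun t => ENNReal.ofReal (d (w t) (v t))) (t + s))
         + wapsC d v s t := by
        refine lintegral_mono fun t => ?_
        simp only [wapsC]
        rw [← ENNReal.ofReal_add (hd.nonneg _ _) (hd.nonneg _ _),
          ← ENNReal.ofReal_add (add_nonneg (hd.nonneg _ _) (hd.nonneg _ _)) (hd.nonneg _ _)]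
        refine ENNReal.ofReal_le_ofReal ?_
        have h3 := hd.tri (w t) (v t) (w (t + s))
        have h4 := hd.tri (v t) (v (t + s)) (w (t + s))
        rw [hd.symm (v (t + s))] at h4
        linarith
    _ = (∫⁻ t in Set.Icc 0 b, ENNReal.ofReal (d (w t) (v t)))
        + (∫⁻ t in Set.Icc 0 b, (fun t => ENNReal.ofReal (d (w t) (v t))) (t + s))
        + ∫⁻ t in Set.Icc 0 b, wapsC d v s t := by
        rw [lintegral_add_right' _ (wapsC_meas hd hvm s).restrict,
          lintegral_add_left' (hmeas n).restrict]
    _ ≤ ε / 2 / 2 + ε / 2 / 2 + ε / 2 := by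
        refine add_le_add (add_le_add ?_ ?_) hs1
        · exact (lintegral_mono_set (Set.Icc_subset_Icc (by norm_num) (by linarith))).trans hn
        · rw [waps_setlint_shift (fun t => ENNReal.ofReal (d (w t) (v t)))]
          exact (lintegral_mono_set (Set.Icc_subset_Icc (by linarith) (by linarith))).trans hn
    _ = ε := by rw [ENNReal.add_halves, ENNReal.add_halves]

theorem waps_cont {α : Type*} [TopologicalSpace α] {d : α → α → ℝ} (hd : WapsDist d)
    {w : ℝ → α} (hw : AEStronglyMeasurable w) (hap : WapsAP d w) (ε : ℝ≥0∞) (hε : 0 < ε) :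
    ∃ l > 0, ∃ r > 0, ∀ s, |s| ≤ r → wapsA l (wapsC d w s) < ε := by
  obtain ⟨ε', hε', hlt⟩ := exists_between hε
  set e := ε' / 2 / 2
  have he : 0 < e := waps_half (waps_half hε')
  obtain ⟨l, hl, a, ha, hr⟩ := hap e he
  have hc := waps_local_cont hd hw (a + l)
  have hc2 : Tendsto (fun s => ENNReal.ofReal (1 / l) * ∫⁻ t in Set.Icc 0 (a + l), wapsC d w s t)
      (𝓝 0) (𝓝 0) := by
    have := ENNReal.Tendsto.const_mul (a := ENNReal.ofReal (1 / l)) hc (Or.inr (by simp))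
    simpa using this
  obtain ⟨r, hr0, hball⟩ := Metric.eventually_nhds_iff.1
    ((ENNReal.tendsto_nhds_zero.1 hc2) (ε' / 2) (waps_half hε'))
  refine ⟨l, hl, r / 2, by positivity, fun s hs => lt_of_le_of_lt ?_ hlt⟩
  have hs' := @hball s (by rw [Real.dist_eq, sub_zero]; linarith)
  refine iSup_le fun ξ => ?_
  obtain ⟨τ, hτ, hτe⟩ := hr (-ξ)
  simp only [Set.mem_ofPred_eq] at hτe
  have hm1 := wapsC_meas hd hw τ
  have hm2 : AEMeasurable (fun t => wapsC d w τ (t + s)) :=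
    hm1.comp_quasiMeasurePreserving (measurePreserving_add_right (volume : Measure ℝ) s).quasiMeasurePreserving
  calc ENNReal.ofReal (1 / l) * ∫⁻ t in Set.Icc ξ (ξ + l), wapsC d w s t
      ≤ ENNReal.ofReal (1 / l) * ∫⁻ t in Set.Icc ξ (ξ + l),
        ((wapsC d w τ t + wapsC d w τ (t + s)) + wapsC d w s (t + τ)) := by
        refine mul_le_mul' le_rfl (lintegral_mono fun t => ?_)
        simp only [wapsC]
        rw [← ENNReal.ofReal_add (hd.nonneg _ _) (hd.nonneg _ _),
          ← ENNReal.ofReal_add (add_nonneg (hd.nonneg _ _) (hd.nonneg _ _)) (hd.nonneg _ _)]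
        refine ENNReal.ofReal_le_ofReal ?_
        have h3 := hd.tri (w t) (w (t + τ)) (w (t + s))
        have h4 := hd.tri (w (t + τ)) (w (t + τ + s)) (w (t + s))
        rw [hd.symm (w (t + τ + s)) (w (t + s)), show t + τ + s = t + s + τ by ring] at h4
        rw [show t + τ + s = t + s + τ by ring]
        linarith
    _ = ENNReal.ofReal (1 / l) * (∫⁻ t in Set.Icc ξ (ξ + l), wapsC d w τ t)
        + ENNReal.ofReal (1 / l) * (∫⁻ t in Set.Icc ξ (ξ + l), wapsC d w τ (t + s))
        + ENNReal.ofReal (1 / l) * (∫⁻ t in Set.Icc ξ (ξ + l), wapsC d w s (t + τ)) := by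
        have hm3 : AEMeasurable (fun t => wapsC d w τ t + wapsC d w τ (t + s)) := hm1.add hm2
        rw [lintegral_add_left' hm3.restrict, lintegral_add_left' hm1.restrict]
        ring
    _ ≤ e + e + ε' / 2 := by
        refine add_le_add (add_le_add ?_ ?_) ?_
        · exact (waps_win_le _ _ _).trans hτe.le
        · refine (waps_win_le l (fun t => wapsC d w τ (t + s)) _).trans ?_
          rw [wapsA_shift]; exact hτe.le
        · refine le_trans (mul_le_mul' le_rfl ?_) hs'
          rw [waps_setlint_shift]
          have := hτ.1; have := hτ.2
          exact lintegral_mono_set (Set.Icc_subset_Icc (by linarith) (by linarith))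
    _ = ε' := by simp only [e]; rw [ENNReal.add_halves, ENNReal.add_halves]

/-- Cost `a` controls cost `b`. -/
def WapsCtrl (a b : ℝ → ℝ → ℝ≥0∞) : Prop :=
  ∀ ε : ℝ≥0∞, 0 < ε → ∃ δ : ℝ≥0∞, 0 < δ ∧ ∀ l > 0, ∃ L₀ > 0, ∀ L ≥ L₀, ∀ τ,
    wapsA l (a τ) < δ → wapsA L (b τ) < ε

/-- `ψ` has small upper mean. -/
def WapsSm (ε : ℝ≥0∞) (ψ : ℝ → ℝ≥0∞) : Prop := ∃ L₀ > 0, ∀ L ≥ L₀, wapsA L ψ < ε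

theorem WapsCtrl.trans {a b c : ℝ → ℝ → ℝ≥0∞} (h1 : WapsCtrl a b) (h2 : WapsCtrl b c) :
    WapsCtrl a c := by
  intro ε hε
  obtain ⟨δ, hδ, h2⟩ := h2 ε hε
  obtain ⟨δ', hδ', h1⟩ := h1 δ hδ
  refine ⟨δ', hδ', fun l hl => ?_⟩
  obtain ⟨L, hL, h1⟩ := h1 l hl
  obtain ⟨L', hL', h2⟩ := h2 L hL
  exact ⟨L', hL', fun M hM τ h => h2 M hM τ (h1 L le_rfl τ h)⟩

theorem WapsCtrl.refl (a : ℝ → ℝ → ℝ≥0∞) : WapsCtrl a a := by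
  intro ε hε
  refine ⟨ε / 2, waps_half hε, fun l hl => ⟨l, hl, fun L hL τ h => ?_⟩⟩
  exact (wapsA_long hl hL _).trans_lt (waps_two_mul_half h)

theorem WapsCtrl.mono {a b c : ℝ → ℝ → ℝ≥0∞} (h1 : WapsCtrl a b)
    (h : ∀ τ, ∀ᵐ t, c τ t ≤ b τ t) : WapsCtrl a c := by
  intro ε hε
  obtain ⟨δ, hδ, h1⟩ := h1 ε hε
  refine ⟨δ, hδ, fun l hl => ?_⟩
  obtain ⟨L, hL, h1⟩ := h1 l hl
  exact ⟨L, hL, fun M hM τ hh => (wapsA_mono (h τ)).trans_lt (h1 M hM τ hh)⟩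

theorem WapsCtrl.const_mul {a b : ℝ → ℝ → ℝ≥0∞} (h1 : WapsCtrl a b) {c : ℝ≥0∞} (hc : c ≠ ∞) :
    WapsCtrl a (fun τ t => c * b τ t) := by
  rcases eq_or_ne c 0 with rfl | hc0
  · intro ε hε
    refine ⟨1, one_pos, fun l hl => ⟨l, hl, fun L _ τ _ => ?_⟩⟩
    simpa [wapsA] using hε
  intro ε hε
  obtain ⟨ε', hε', hlt⟩ := exists_between hε
  obtain ⟨δ, hδ, h1⟩ := h1 (ε' / c) (ENNReal.div_pos hε'.ne' hc)
  refine ⟨δ, hδ, fun l hl => ?_⟩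
  obtain ⟨L, hL, h1⟩ := h1 l hl
  refine ⟨L, hL, fun M hM τ hh => lt_of_le_of_lt ?_ hlt⟩
  rw [wapsA_const_mul hc]
  calc c * wapsA M (b τ) ≤ c * (ε' / c) := by gcongr; exact (h1 M hM τ hh).le
    _ = ε' := ENNReal.mul_div_cancel hc0 hc

theorem WapsCtrl.add {a b c : ℝ → ℝ → ℝ≥0∞} (h1 : WapsCtrl a b) (h2 : WapsCtrl a c)
    (hm : ∀ τ, AEMeasurable (b τ)) : WapsCtrl a (fun τ t => b τ t + c τ t) := by
  intro ε hε
  obtain ⟨δ, hδ, h1⟩ := h1 (ε / 2) (waps_half hε)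
  obtain ⟨δ', hδ', h2⟩ := h2 (ε / 2) (waps_half hε)
  refine ⟨min δ δ', lt_min hδ hδ', fun l hl => ?_⟩
  obtain ⟨L, hL, h1⟩ := h1 l hl
  obtain ⟨L', hL', h2⟩ := h2 l hl
  refine ⟨max L L', lt_max_of_lt_left hL, fun M hM τ hh => ?_⟩
  refine (wapsA_add (hm τ)).trans_lt ?_
  rw [← ENNReal.add_halves ε]
  exact ENNReal.add_lt_add (h1 M ((le_max_left _ _).trans hM) τ (hh.trans_le (min_le_left _ _)))
    (h2 M ((le_max_right _ _).trans hM) τ (hh.trans_le (min_le_right _ _)))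

theorem waps_crit {a b : ℝ → ℝ → ℝ≥0∞}
    (h : ∀ ε : ℝ≥0∞, 0 < ε → ∃ (c : ℝ → ℝ → ℝ≥0∞) (ψ : ℝ → ℝ≥0∞), WapsCtrl a c ∧
      (∀ τ, AEMeasurable (c τ)) ∧ WapsSm ε ψ ∧ ∀ τ, ∀ᵐ t, b τ t ≤ c τ t + ψ t) :
    WapsCtrl a b := by
  intro ε hε
  obtain ⟨c, ψ, hc, hm, ⟨L₁, hL₁, hψ⟩, hb⟩ := h (ε / 2) (waps_half hε)
  obtain ⟨δ, hδ, hc⟩ := hc (ε / 2) (waps_half hε)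
  refine ⟨δ, hδ, fun l hl => ?_⟩
  obtain ⟨L, hL, h1⟩ := hc l hl
  refine ⟨max L L₁, lt_max_of_lt_left hL, fun M hM τ hh => ?_⟩
  refine (wapsA_mono (hb τ)).trans_lt ((wapsA_add (hm τ)).trans_lt ?_)
  rw [← ENNReal.add_halves ε]
  exact ENNReal.add_lt_add (h1 M ((le_max_left _ _).trans hM) τ hh)
    (hψ M ((le_max_right _ _).trans hM))

theorem WapsSm.of_lt {ε : ℝ≥0∞} {ψ : ℝ → ℝ≥0∞} {l : ℝ} (hl : 0 < l) (h : wapsA l ψ < ε / 2) :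
    WapsSm ε ψ :=
  ⟨l, hl, fun _ hL => (wapsA_long hl hL _).trans_lt (waps_two_mul_half h)⟩

theorem WapsSm.mono {ε : ℝ≥0∞} {ψ φ : ℝ → ℝ≥0∞} (h : WapsSm ε ψ) (hφ : ∀ t, φ t ≤ ψ t) :
    WapsSm ε φ := by
  obtain ⟨L, hL, h⟩ := h
  exact ⟨L, hL, fun M hM => (wapsA_mono (ae_of_all _ hφ)).trans_lt (h M hM)⟩

theorem WapsSm.add {ε : ℝ≥0∞} {ψ φ : ℝ → ℝ≥0∞} (h : WapsSm (ε / 2) ψ) (h' : WapsSm (ε / 2) φ)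
    (hm : AEMeasurable ψ) : WapsSm ε (fun t => ψ t + φ t) := by
  obtain ⟨L, hL, h⟩ := h
  obtain ⟨L', hL', h'⟩ := h'
  refine ⟨max L L', lt_max_of_lt_left hL, fun M hM => (wapsA_add hm).trans_lt ?_⟩
  rw [← ENNReal.add_halves ε]
  exact ENNReal.add_lt_add (h M ((le_max_left _ _).trans hM)) (h' M ((le_max_right _ _).trans hM))

theorem WapsCtrl.ap {α β : Type*} {d : α → α → ℝ} {e : β → β → ℝ} {z : ℝ → α} {v : ℝ → β}
    (h : WapsCtrl (wapsC d z) (wapsC e v)) (hz : WapsAP d z) : WapsAP e v := by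
  intro ε hε
  obtain ⟨δ, hδ, h⟩ := h ε hε
  obtain ⟨l, hl, hr⟩ := hz δ hδ
  obtain ⟨L, hL, h⟩ := h l hl
  exact ⟨L, hL, hr.waps_mono fun τ hτ => h L le_rfl τ hτ⟩

/-- Equidistribution of means for functions that are Lipschitz with respect to `w`. -/
theorem waps_lemW {α : Type*} [TopologicalSpace α] {d : α → α → ℝ} (hd : WapsDist d)
    {w : ℝ → α} (hw : AEStronglyMeasurable w) (hap : WapsAP d w) (C : ℝ) (ε : ℝ≥0∞)
    (hε : 0 < ε) :
    ∃ L₀ > 0, ∀ L ≥ L₀, ∀ v : ℝ → ℝ≥0∞, (∀ t, v t ≤ 1) →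
      (∀ t s, v t ≤ v s + ENNReal.ofReal C * ENNReal.ofReal (d (w t) (w s))) →
      wapsA L v ≤ ENNReal.ofReal (1 / L) * (∫⁻ t in Set.Icc 0 L, v t) + ε := by
  have hctrl := (WapsCtrl.refl (wapsC d w)).const_mul (c := ENNReal.ofReal C) (by simp)
  obtain ⟨δ, hδ, h⟩ := hctrl (ε / 2) (waps_half hε)
  obtain ⟨l, hl, a, ha, hr⟩ := hap δ hδ
  obtain ⟨L₁, hL₁, h⟩ := h l hl
  obtain ⟨q, hq, hqε⟩ := waps_exists_real (waps_half hε)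
  refine ⟨max L₁ (a / q), lt_max_of_lt_left hL₁, fun L hL v hv1 hv => ?_⟩
  have hL0 : 0 < L := hL₁.trans_le ((le_max_left _ _).trans hL)
  have haq : a / L ≤ q := by
    have := (le_max_right _ _).trans hL
    rw [div_le_iff₀ hq] at this
    rw [div_le_iff₀ hL0]; linarith
  refine iSup_le fun ξ => ?_
  obtain ⟨τ, hτ, hτe⟩ := hr (-ξ)
  have hτ1 := hτ.1
  have hτ2 := hτ.2
  have hA := h L ((le_max_left _ _).trans hL) τ hτe
  have hm : AEMeasurable (fun t => ENNReal.ofReal C * wapsC d w τ t) :=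
    (wapsC_meas hd hw τ).const_mul _
  calc ENNReal.ofReal (1 / L) * ∫⁻ t in Set.Icc ξ (ξ + L), v t
      ≤ ENNReal.ofReal (1 / L) * ∫⁻ t in Set.Icc ξ (ξ + L),
          (v (t + τ) + ENNReal.ofReal C * wapsC d w τ t) :=
        mul_le_mul' le_rfl (lintegral_mono fun t => hv t (t + τ))
    _ = ENNReal.ofReal (1 / L) * (∫⁻ t in Set.Icc (ξ + τ) (ξ + L + τ), v t)
        + ENNReal.ofReal (1 / L) * ∫⁻ t in Set.Icc ξ (ξ + L), ENNReal.ofReal C * wapsC d w τ t := by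
        rw [lintegral_add_right' _ hm.restrict, waps_setlint_shift, mul_add]
    _ ≤ ENNReal.ofReal (1 / L) * ((∫⁻ t in Set.Icc 0 L, v t) + ENNReal.ofReal a) + ε / 2 := by
        refine add_le_add (mul_le_mul' le_rfl ?_) ((waps_win_le _ _ _).trans hA.le)
        have hsub : Set.Icc (ξ + τ) (ξ + L + τ) ⊆ Set.Icc 0 L ∪ Set.Icc L (L + a) := by
          intro x hx
          have := hx.1; have := hx.2
          rcases le_total x L with h | h
          · exact Or.inl ⟨by linarith, h⟩
          · exact Or.inr ⟨h, by linarith⟩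
        refine (lintegral_mono_set hsub).trans ((lintegral_union_le _ _ _).trans ?_)
        refine add_le_add le_rfl ?_
        refine (lintegral_mono (g := fun _ => 1) hv1).trans ?_
        simp
    _ ≤ ENNReal.ofReal (1 / L) * (∫⁻ t in Set.Icc 0 L, v t) + ε / 2 + ε / 2 := by
        rw [mul_add]
        refine add_le_add (add_le_add le_rfl ?_) le_rfl
        rw [← ENNReal.ofReal_mul (by positivity)]
        refine le_trans (ENNReal.ofReal_le_ofReal ?_) hqε
        rw [one_div, inv_mul_eq_div]; exact haq
    _ = _ := by rw [add_assoc, ENNReal.add_halves]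

theorem waps_threshold {α : Type*} [TopologicalSpace α] {d : α → α → ℝ} (hd : WapsDist d)
    {w : ℝ → α} (hw : AEStronglyMeasurable w) (hap : WapsAP d w) (C : ℝ) (hC : 0 ≤ C) (u : ℝ → ℝ)
    (hu : ∀ t s, |u t - u s| ≤ C * d (w t) (w s)) (a b : ℝ) (hab : a < b) :
    ∃ r, a < r ∧ r < b ∧ ∀ ε : ℝ≥0∞, 0 < ε → ∃ δ > 0,
      WapsSm ε (Set.indicator {t | |u t - r| < δ} 1) := by
  classical
  let U := hyperfilter ℕ
  let avg : (ℝ → ℝ≥0∞) → ℕ → ℝ≥0∞ := fun φ n =>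
    ENNReal.ofReal (1 / (n + 1 : ℝ)) * ∫⁻ t in Set.Icc 0 (n + 1 : ℝ), φ t
  have hmono : ∀ φ ψ : ℝ → ℝ≥0∞, (∀ t, φ t ≤ ψ t) → ∀ n, avg φ n ≤ avg ψ n := fun φ ψ h n =>
    mul_le_mul' le_rfl (lintegral_mono h)
  have hadd : ∀ φ ψ : ℝ → ℝ≥0∞, ∀ n, avg φ n + avg ψ n ≤ avg (fun t => φ t + ψ t) n := by
    intro φ ψ n
    simp only [avg]
    rw [← mul_add]
    exact mul_le_mul' le_rfl (le_lintegral_add _ _)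
  have hone : ∀ n, avg (fun _ => 1) n = 1 := by
    intro n
    have := waps_ofReal_inv_mul (show (0 : ℝ) < n + 1 by positivity)
    simpa [avg] using this
  let lm : (ℝ → ℝ≥0∞) → ℝ≥0∞ := fun φ => (U.map (avg φ)).lim
  have hlm : ∀ φ, Tendsto (avg φ) U (𝓝 (lm φ)) := fun φ => (U.map (avg φ)).le_nhds_lim
  have hlmono : ∀ φ ψ : ℝ → ℝ≥0∞, (∀ t, φ t ≤ ψ t) → lm φ ≤ lm ψ := fun φ ψ h =>
    le_of_tendsto_of_tendsto' (hlm φ) (hlm ψ) (hmono φ ψ h)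
  let I : ℝ → ℝ → ℝ≥0∞ := fun c => Set.indicator {t | u t < c} 1
  let G : ℝ → ℝ≥0∞ := fun c => lm (I c)
  have hG1 : ∀ c, G c ≤ 1 := by
    intro c
    refine le_of_tendsto' (hlm (I c)) fun n => ?_
    rw [← hone n]
    refine hmono _ _ (fun t => ?_) n
    exact Set.indicator_le_self' (fun _ _ => zero_le) t
  have hGm : Monotone G := by
    intro c c' h
    refine hlmono _ _ fun t => ?_
    exact Set.indicator_le_indicator_of_subset (fun t (ht : u t < c) => ht.trans_le h)
      (fun _ => zero_le) t
  obtain ⟨r, hr, hcont⟩ : ∃ r ∈ Set.Ioo a b, ContinuousAt G r := by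
    by_contra! hcon
    refine (Cardinal.Real.Ioo_countable_iff (x := a) (y := b)).not.2 (not_le.2 hab) ?_
    exact hGm.countable_not_continuousAt.mono hcon
  refine ⟨r, hr.1, hr.2, fun ε hε => ?_⟩
  set e := ε / 2 / 2 / 2 with he_def
  have he : 0 < e := waps_half (waps_half (waps_half hε))
  have hGr : G r ≠ ∞ := ne_top_of_le_ne_top ENNReal.one_ne_top (hG1 r)
  obtain ⟨δ, hδ, hδG⟩ : ∃ δ > 0, G (r + 2 * δ) ≤ G (r - 2 * δ) + 2 * e := by
    have h1 := (ENNReal.tendsto_nhds hGr).1 hcont e he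
    obtain ⟨δ, hδ, h⟩ := Metric.eventually_nhds_iff.1 h1
    refine ⟨δ / 4, by positivity, ?_⟩
    have h2 := @h (r + 2 * (δ / 4)) (by rw [Real.dist_eq, add_sub_cancel_left, abs_of_pos] <;> linarith)
    have h3 := @h (r - 2 * (δ / 4)) (by
      rw [Real.dist_eq, abs_sub_comm, sub_sub_cancel, abs_of_pos] <;> linarith)
    calc G (r + 2 * (δ / 4)) ≤ G r + e := h2.2
      _ ≤ (G (r - 2 * (δ / 4)) + e) + e := by gcongr; exact tsub_le_iff_right.1 h3.1
      _ = _ := by ring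
  refine ⟨δ, hδ, ?_⟩
  let v : ℝ → ℝ≥0∞ := fun t => ENNReal.ofReal (min 1 (2 - |u t - r| / δ))
  have hv1 : ∀ t, v t ≤ 1 := fun t => by
    rw [← ENNReal.ofReal_one]; exact ENNReal.ofReal_le_ofReal (min_le_left _ _)
  have hvl : ∀ t s, v t ≤ v s + ENNReal.ofReal (C / δ) * ENNReal.ofReal (d (w t) (w s)) := by
    intro t s
    rw [← ENNReal.ofReal_mul (by positivity)]
    refine le_trans (ENNReal.ofReal_le_ofReal ?_) (ENNReal.ofReal_add_le)
    have h1 : |u s - r| ≤ |u t - r| + C * d (w t) (w s) := by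
      have := abs_sub_abs_le_abs_sub (u s - r) (u t - r)
      rw [sub_sub_sub_cancel_right, abs_sub_comm (u s) (u t)] at this
      linarith [hu t s]
    have h2 : |u s - r| / δ ≤ |u t - r| / δ + C / δ * d (w t) (w s) := by
      calc |u s - r| / δ ≤ (|u t - r| + C * d (w t) (w s)) / δ := by gcongr
        _ = _ := by ring
    have h3 : 0 ≤ C / δ * d (w t) (w s) := mul_nonneg (by positivity) (hd.nonneg _ _)
    rw [← min_add_add_right]
    refine min_le_min (by linarith) (by linarith)
  have hsum : lm v + G (r - 2 * δ) ≤ G (r + 2 * δ) := by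
    refine le_of_tendsto_of_tendsto' ((hlm v).add (hlm (I (r - 2 * δ)))) (hlm (I (r + 2 * δ)))
      fun n => (hadd _ _ n).trans (hmono _ _ (fun t => ?_) n)
    simp only [I, Set.indicator_apply, Set.mem_ofPred_eq, Pi.one_apply]
    by_cases h1 : u t < r - 2 * δ
    · have hv0 : v t = 0 := by
        simp only [v, ENNReal.ofReal_eq_zero]
        refine (min_le_right _ _).trans ?_
        rw [sub_nonpos, le_div_iff₀ hδ, abs_of_neg (by linarith)]; linarith
      rw [if_pos h1, if_pos (by linarith), hv0, zero_add]
    · rw [if_neg h1, add_zero]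
      by_cases h2 : u t < r + 2 * δ
      · rw [if_pos h2]; exact hv1 t
      · have hv0 : v t = 0 := by
          simp only [v, ENNReal.ofReal_eq_zero]
          refine (min_le_right _ _).trans ?_
          rw [sub_nonpos, le_div_iff₀ hδ, abs_of_pos (by linarith)]; linarith
        rw [hv0]; exact zero_le
  have hlv : lm v ≤ 2 * e := by
    have h1 : lm v + G (r - 2 * δ) ≤ 2 * e + G (r - 2 * δ) := by
      rw [add_comm (2 * e)]; exact hsum.trans hδG
    exact (ENNReal.add_le_add_iff_right
      (ne_top_of_le_ne_top ENNReal.one_ne_top (hG1 _))).1 h1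
  rcases eq_or_ne ε ∞ with rfl | hεt
  · refine ⟨1, one_pos, fun L hL => ?_⟩
    refine lt_of_le_of_lt (wapsA_mono (ψ := fun _ => 1) (ae_of_all _ fun t =>
      Set.indicator_le_self' (fun _ _ => zero_le) t)) ?_
    rw [wapsA_const (by linarith)]; simp
  have het : e ≠ ∞ := by
    refine ne_top_of_le_ne_top hεt ?_
    exact (ENNReal.half_le_self.trans ENNReal.half_le_self).trans ENNReal.half_le_self
  obtain ⟨L₀, hL₀, hW⟩ := waps_lemW hd hw hap (C / δ) e he
  have hlt : lm v < 3 * e := by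
    refine hlv.trans_lt ?_
    exact (ENNReal.mul_lt_mul_iff_left he.ne' het).2 (by norm_num)
  have hev : ∀ᶠ n in (U : Filter ℕ), avg v n < 3 * e := (hlm v).eventually_lt_const hlt
  have hev2 : ∀ᶠ n : ℕ in (U : Filter ℕ), L₀ ≤ (n + 1 : ℝ) := by
    have : ∀ᶠ n : ℕ in atTop, L₀ ≤ (n + 1 : ℝ) := by
      filter_upwards [eventually_ge_atTop ⌈L₀⌉₊] with n hn
      have := Nat.le_of_ceil_le hn
      linarith
    exact Nat.hyperfilter_le_atTop this
  obtain ⟨n, hn1, hn2⟩ := (hev.and hev2).exists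
  have hA := hW (n + 1) hn2 v hv1 hvl
  refine WapsSm.of_lt (l := n + 1) (by positivity) ?_
  calc wapsA (n + 1) (Set.indicator {t | |u t - r| < δ} 1) ≤ wapsA (n + 1) v := by
        refine wapsA_mono (ae_of_all _ fun t => ?_)
        refine Set.indicator_le' (s := {t | |u t - r| < δ}) (f := 1) (g := v)
          (fun t ht => ?_) (fun _ _ => zero_le) t
        rw [Set.mem_ofPred_eq] at ht
        simp only [v, Pi.one_apply]
        rw [min_eq_left, ENNReal.ofReal_one]
        have : |u t - r| / δ ≤ 1 := by rw [div_le_one hδ]; exact ht.le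
        linarith
    _ ≤ avg v n + e := hA
    _ < 3 * e + e := ENNReal.add_lt_add_right het hn1
    _ = (e + e) + (e + e) := by ring
    _ = ε / 2 := by rw [he_def, ENNReal.add_halves, ENNReal.add_halves]

open Classical in
/-- The discrete distance. -/
noncomputable def wapsDisc {β : Type*} (x y : β) : ℝ := if x = y then 0 else 1

theorem wapsDisc_self {β : Type*} (x : β) : wapsDisc x x = 0 := if_pos rfl

theorem wapsDisc_ne {β : Type*} {x y : β} (h : x ≠ y) : wapsDisc x y = 1 := if_neg h

theorem wapsDisc_le_one {β : Type*} (x y : β) : wapsDisc x y ≤ 1 := by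
  unfold wapsDisc; split_ifs <;> norm_num

theorem wapsDisc_nonneg {β : Type*} (x y : β) : 0 ≤ wapsDisc x y := by
  unfold wapsDisc; split_ifs <;> norm_num

theorem wapsDisc_dist (β : Type*) [TopologicalSpace β] [DiscreteTopology β] :
    WapsDist (wapsDisc : β → β → ℝ) where
  nonneg := wapsDisc_nonneg
  le_one := wapsDisc_le_one
  self := wapsDisc_self
  symm x y := by
    by_cases h : x = y
    · rw [h]
    · rw [wapsDisc_ne h, wapsDisc_ne (Ne.symm h)]
  tri x y z := by
    by_cases h : x = y
    · subst h; rw [wapsDisc_self, zero_add]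
    · rw [wapsDisc_ne h]
      linarith [wapsDisc_le_one x z, wapsDisc_nonneg y z]
  cont := continuous_of_discreteTopology

theorem waps_partition_sm {α : Type*} [TopologicalSpace α] {d : α → α → ℝ} (hd : WapsDist d)
    {w : ℝ → α} (hw : StronglyMeasurable w) (hap : WapsAP d w) (ε : ℝ) (hε : 0 < ε) :
    ∃ p : ℝ → ℕ, Measurable p ∧ ∃ c : ℕ → α, (∀ t, d (w t) (c (p t)) < ε) ∧
      WapsCtrl (wapsC d w) (wapsC wapsDisc p) := by
  classical
  have hw' := hw.aestronglyMeasurable (μ := (volume : Measure ℝ))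
  -- centers
  obtain ⟨c, hc⟩ : ∃ c : ℕ → α, ∀ t, ∀ e > 0, ∃ i, d (w t) (c i) < e := by
    have hcount : (⋃ n, Set.range (hw.approx n)).Countable :=
      Set.countable_iUnion fun n => (hw.approx n).finite_range.countable
    obtain ⟨c, hc⟩ := hcount.exists_eq_range ⟨_, Set.mem_iUnion.2 ⟨0, 0, rfl⟩⟩
    refine ⟨c, fun t e he => ?_⟩
    have h2 := (hd.cont.tendsto (w t, w t)).comp
      ((tendsto_const_nhds (x := w t)).prodMk_nhds (hw.tendsto_approx t))
    simp only [hd.self] at h2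
    obtain ⟨n, hn⟩ := (h2.eventually_lt_const he).exists
    have : hw.approx n t ∈ Set.range c := by
      rw [← hc]; exact Set.mem_iUnion.2 ⟨n, t, rfl⟩
    obtain ⟨i, hi⟩ := this
    exact ⟨i, by rw [hi]; exact hn⟩
  let u : ℕ → ℝ → ℝ := fun i t => d (w t) (c i)
  have hum : ∀ i, Measurable (u i) := fun i =>
    (hd.cont.comp_stronglyMeasurable (hw.prodMk stronglyMeasurable_const)).measurable
  have hul : ∀ i t s, |u i t - u i s| ≤ 1 * d (w t) (w s) := by
    intro i t s
    rw [abs_le, one_mul]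
    have h1 := hd.tri (w t) (w s) (c i)
    have h2 := hd.tri (w s) (w t) (c i)
    rw [hd.symm (w s) (w t)] at h2
    constructor <;> simp only [u] <;> linarith
  choose r hr1 hr2 hr3 using fun i =>
    waps_threshold hd hw' hap 1 zero_le_one (u i) (hul i) (ε / 2) ε (by linarith)
  have hex : ∀ t, ∃ i, u i t < r i := by
    intro t
    obtain ⟨i, hi⟩ := hc t (ε / 2) (by linarith)
    exact ⟨i, hi.trans (hr1 i)⟩
  refine ⟨fun t => Nat.find (hex t),
    measurable_find hex fun k => measurableSet_lt (hum k) measurable_const, c,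
    fun t => (Nat.find_spec (hex t)).trans (hr2 _), ?_⟩
  -- the bad sets
  have hbad : ∀ N : ℕ, ∀ e : ℝ≥0∞, 0 < e → ∃ ψ : ℝ → ℝ≥0∞, Measurable ψ ∧ WapsSm e ψ ∧
      ∃ δ > 0, ∀ t, ∀ i < N, |u i t - r i| < δ → 1 ≤ ψ t := by
    intro N
    induction N with
    | zero =>
      intro e he
      refine ⟨fun _ => 0, measurable_const, ⟨1, one_pos, fun L _ => by simpa [wapsA] using he⟩, 1,
        one_pos, fun t i hi => absurd hi (Nat.not_lt_zero _)⟩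
    | succ N ih =>
      intro e he
      obtain ⟨ψ, h1, h2, δ, hδ, h3⟩ := ih (e / 2) (waps_half he)
      obtain ⟨δ', hδ', h4⟩ := hr3 N (e / 2) (waps_half he)
      have hms : MeasurableSet {t | |u N t - r N| < δ'} := by
        have := hum N
        exact measurableSet_lt (by fun_prop) measurable_const
      refine ⟨fun t => ψ t + Set.indicator {t | |u N t - r N| < δ'} 1 t,
        h1.add (measurable_one.indicator hms), WapsSm.add h2 h4 h1.aemeasurable,
        min δ δ', lt_min hδ hδ', fun t i hi hlt => ?_⟩
      rcases Nat.lt_succ_iff_lt_or_eq.1 hi with hi | rfl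
      · exact (h3 t i hi (hlt.trans_le (min_le_left _ _))).trans le_self_add
      · refine le_trans ?_ le_add_self
        rw [Set.indicator_of_mem (by exact hlt.trans_le (min_le_right _ _))]
        exact le_rfl
  -- the tails
  have htail : ∀ e : ℝ≥0∞, 0 < e → ∃ N : ℕ, ∃ ψ : ℝ → ℝ≥0∞, WapsSm e ψ ∧
      ∀ t, (∀ i < N, ε / 2 ≤ u i t) → 1 ≤ ψ t := by
    intro e he
    let m : ℕ → ℝ → ℝ := fun N => Nat.rec (fun _ => 1) (fun i f t => min (f t) (u i t)) N
    have m0 : ∀ t, m 0 t = 1 := fun t => rfl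
    have ms : ∀ N t, m (N + 1) t = min (m N t) (u N t) := fun N t => rfl
    have mm : ∀ N, Measurable (m N) := by
      intro N
      induction N with
      | zero => exact measurable_const
      | succ N ih => exact ih.min (hum N)
    have m1 : ∀ N t, 0 ≤ m N t ∧ m N t ≤ 1 := by
      intro N t
      induction N with
      | zero => simp [m0]
      | succ N ih => exact ⟨le_min ih.1 (hd.nonneg _ _), (min_le_left _ _).trans ih.2⟩
    have ml : ∀ N t s, m N t ≤ m N s + d (w t) (w s) := by
      intro N t s
      induction N with
      | zero => simpa [m0] using hd.nonneg _ _
      | succ N ih =>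
        rw [ms, ms, ← min_add_add_right]
        refine min_le_min ih ?_
        have := (abs_le.1 (hul N t s)).2
        linarith
    have mle : ∀ N i, i < N → ∀ t, m N t ≤ u i t := by
      intro N
      induction N with
      | zero => intro i hi; exact absurd hi (Nat.not_lt_zero _)
      | succ N ih =>
        intro i hi t
        rcases Nat.lt_succ_iff_lt_or_eq.1 hi with hi | rfl
        · exact (min_le_left _ _).trans (ih i hi t)
        · exact min_le_right _ _
    have mge : ∀ N t b, b ≤ 1 → (∀ i < N, b ≤ u i t) → b ≤ m N t := by
      intro N t b hb
      induction N with
      | zero => intro _; exact hb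
      | succ N ih =>
        intro h
        exact le_min (ih fun i hi => h i (hi.trans (Nat.lt_succ_self N))) (h N (Nat.lt_succ_self N))
    have mt : ∀ t, Tendsto (fun N => ENNReal.ofReal (m N t)) atTop (𝓝 0) := by
      intro t
      rw [← ENNReal.ofReal_zero]
      refine ENNReal.tendsto_ofReal ?_
      rw [Metric.tendsto_atTop]
      intro b hb
      obtain ⟨i, hi⟩ := hc t b hb
      refine ⟨i + 1, fun n hn => ?_⟩
      rw [Real.dist_eq, sub_zero, abs_of_nonneg (m1 n t).1]
      exact (mle n i (by omega) t).trans_lt hi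
    set K : ℝ≥0∞ := ENNReal.ofReal (max 1 (2 / ε)) with hK
    have hKt : K ≠ ∞ := by simp [hK]
    have hK0 : K ≠ 0 := by
      rw [hK, Ne, ENNReal.ofReal_eq_zero, not_le]; exact lt_max_of_lt_left one_pos
    obtain ⟨e', he', hee'⟩ := exists_between (waps_half he)
    have heK : 0 < e' / K := ENNReal.div_pos he'.ne' hKt
    obtain ⟨L, hL, hW⟩ := waps_lemW hd hw' hap 1 (e' / K / 2) (waps_half heK)
    have hti : Tendsto (fun N => ENNReal.ofReal (1 / L) * ∫⁻ t in Set.Icc 0 L,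
        ENNReal.ofReal (m N t)) atTop (𝓝 0) := by
      have h := tendsto_lintegral_of_dominated_convergence
        (μ := volume.restrict (Set.Icc 0 L))
        (F := fun N t => ENNReal.ofReal (m N t)) (f := fun _ => 0)
        (fun _ => 1) (fun N => (mm N).ennreal_ofReal)
        (fun N => ae_of_all _ fun t => by
          rw [← ENNReal.ofReal_one]; exact ENNReal.ofReal_le_ofReal (m1 N t).2)
        (by simp) (ae_of_all _ mt)
      have := ENNReal.Tendsto.const_mul (a := ENNReal.ofReal (1 / L)) h (Or.inr (by simp))
      simpa using this
    obtain ⟨N, hN⟩ := ((ENNReal.tendsto_nhds_zero.1 hti) (e' / K / 2) (waps_half heK)).exists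
    refine ⟨N, fun t => K * ENNReal.ofReal (m N t), WapsSm.of_lt hL ?_, fun t ht => ?_⟩
    · rw [wapsA_const_mul hKt]
      refine lt_of_le_of_lt ?_ hee'
      calc K * wapsA L (fun t => ENNReal.ofReal (m N t)) ≤ K * (e' / K) := by
            gcongr
            refine (hW L le_rfl _ (fun t => ?_) (fun t s => ?_)).trans ?_
            · rw [← ENNReal.ofReal_one]; exact ENNReal.ofReal_le_ofReal (m1 N t).2
            · rw [ENNReal.ofReal_one, one_mul, ← ENNReal.ofReal_add (m1 N s).1 (hd.nonneg _ _)]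
              exact ENNReal.ofReal_le_ofReal (ml N t s)
            · refine (add_le_add hN le_rfl).trans ?_
              rw [ENNReal.add_halves]
        _ = e' := ENNReal.mul_div_cancel hK0 hKt
    · have h1 := mge N t (min 1 (ε / 2)) (min_le_left _ _) fun i hi => (min_le_right _ _).trans (ht i hi)
      change 1 ≤ K * ENNReal.ofReal (m N t)
      rw [hK, ← ENNReal.ofReal_mul (by positivity), ← ENNReal.ofReal_one]
      refine ENNReal.ofReal_le_ofReal ?_
      have h2 : 1 ≤ max 1 (2 / ε) * min 1 (ε / 2) := by
        rcases le_total 1 (ε / 2) with h | h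
        · rw [min_eq_left h, mul_one]; exact le_max_left _ _
        · rw [min_eq_right h]
          calc 1 = 2 / ε * (ε / 2) := by field_simp
            _ ≤ _ := by gcongr; exact le_max_right _ _
      exact h2.trans (by gcongr)
  refine waps_crit fun e he => ?_
  obtain ⟨N, ψ₁, hs1, h1⟩ := htail (e / 2) (waps_half he)
  obtain ⟨ψ₂, hm2, hs2, δ, hδ, h2⟩ := hbad N (e / 2) (waps_half he)
  refine ⟨fun τ t => ENNReal.ofReal (1 / δ) * wapsC d w τ t, fun t => ψ₂ t + ψ₁ t,
    (WapsCtrl.refl _).const_mul (by simp), fun τ => (wapsC_meas hd hw' τ).const_mul _,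
    WapsSm.add hs2 hs1 hm2.aemeasurable, fun τ => ae_of_all _ fun t => ?_⟩
  by_cases hA : ∀ i < N, ε / 2 ≤ u i t
  · refine (wapsC_le_one (wapsDisc_dist ℕ) _ _ _).trans ((h1 t hA).trans ?_)
    exact le_add_self.trans le_add_self
  by_cases hB : ∃ i < N, |u i t - r i| < δ
  · obtain ⟨i, hi, hB⟩ := hB
    refine (wapsC_le_one (wapsDisc_dist ℕ) _ _ _).trans ((h2 t i hi hB).trans ?_)
    exact le_self_add.trans le_add_self
  by_cases hD : δ ≤ d (w t) (w (t + τ))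
  · refine (wapsC_le_one (wapsDisc_dist ℕ) _ _ _).trans (le_trans ?_ le_self_add)
    simp only [wapsC]
    rw [← ENNReal.ofReal_mul (by positivity), ← ENNReal.ofReal_one]
    refine ENNReal.ofReal_le_ofReal ?_
    rw [one_div, inv_mul_eq_div, one_le_div hδ]; exact hD
  -- the good case
  push Not at hA hB hD
  obtain ⟨i, hiN, hi⟩ := hA
  have hsame : ∀ j < N, (u j t < r j ↔ u j (t + τ) < r j) := by
    intro j hj
    have h3 := hB j hj
    have h4 := (hul j t (t + τ)).trans_lt (by rw [one_mul]; exact hD)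
    rw [abs_lt] at h4
    rcases le_abs.1 h3 with h3 | h3
    · constructor <;> intro h <;> linarith
    · constructor <;> intro h <;> linarith
  have hle : Nat.find (hex t) < N := (Nat.find_min' (hex t) (hi.trans (hr1 i))).trans_lt hiN
  have heq : Nat.find (hex t) = Nat.find (hex (t + τ)) := by
    have h5 : Nat.find (hex (t + τ)) ≤ Nat.find (hex t) :=
      Nat.find_min' _ ((hsame _ hle).1 (Nat.find_spec (hex t)))
    refine le_antisymm (Nat.find_min' _ ?_) h5
    exact (hsame _ (h5.trans_lt hle)).2 (Nat.find_spec (hex (t + τ)))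
  simp only [wapsC]
  rw [heq, wapsDisc_self, ENNReal.ofReal_zero]
  exact zero_le

theorem wapsCtrl_congr_left {α : Type*} {d : α → α → ℝ} {v w : ℝ → α} {b : ℝ → ℝ → ℝ≥0∞}
    (h : v =ᵐ[volume] w) (hv : WapsCtrl (wapsC d v) b) : WapsCtrl (wapsC d w) b := by
  refine WapsCtrl.trans ((WapsCtrl.refl _).mono fun τ => ?_) hv
  filter_upwards [h, waps_ae_shift h τ] with t h1 h2
  simp [wapsC, h1, h2]

theorem wapsCtrl_congr_right {α : Type*} {d : α → α → ℝ} {v w : ℝ → α} {b : ℝ → ℝ → ℝ≥0∞}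
    (h : v =ᵐ[volume] w) (hv : WapsCtrl b (wapsC d v)) : WapsCtrl b (wapsC d w) := by
  refine hv.mono fun τ => ?_
  filter_upwards [h, waps_ae_shift h τ] with t h1 h2
  simp [wapsC, h1, h2]

theorem waps_partition {α : Type*} [TopologicalSpace α] {d : α → α → ℝ} (hd : WapsDist d)
    {w : ℝ → α} (hw : AEStronglyMeasurable w) (hap : WapsAP d w) (ε : ℝ) (hε : 0 < ε) :
    ∃ p : ℝ → ℕ, Measurable p ∧ ∃ c : ℕ → α, (∀ᵐ t, d (w t) (c (p t)) < ε) ∧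
      WapsCtrl (wapsC d w) (wapsC wapsDisc p) := by
  obtain ⟨w', hw', h⟩ := hw
  obtain ⟨p, hp, c, hc, hctrl⟩ := waps_partition_sm hd hw' (wapsAP_congr h hap) ε hε
  refine ⟨p, hp, c, ?_, wapsCtrl_congr_left h.symm hctrl⟩
  filter_upwards [h] with t ht
  rw [ht]; exact hc t

theorem waps_bdist_dist (U : Type*) [PseudoMetricSpace U] : WapsDist (bdist : U → U → ℝ) where
  nonneg x y := le_min zero_le_one dist_nonneg
  le_one x y := min_le_left _ _
  self x := by simp [bdist]
  symm x y := by simp only [bdist, dist_comm]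
  tri x y z := by
    simp only [bdist]
    rcases le_total 1 (dist x y) with h | h
    · rw [min_eq_left h]
      have := le_min zero_le_one (dist_nonneg (x := y) (y := z))
      linarith [min_le_left 1 (dist x z)]
    rcases le_total 1 (dist y z) with h' | h'
    · rw [min_eq_left h']
      have := le_min zero_le_one (dist_nonneg (x := x) (y := y))
      linarith [min_le_left 1 (dist x z)]
    rw [min_eq_right h, min_eq_right h']
    exact (min_le_right _ _).trans (dist_triangle _ _ _)
  cont := by unfold bdist; fun_prop

theorem waps_clDist_eq {U : Type*} [MetricSpace U] (A B : Closeds U) :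
    clDist A B = (min 1 (edist A B)).toReal := rfl

theorem waps_clDist_dist (U : Type*) [MetricSpace U] :
    WapsDist (clDist : Closeds U → Closeds U → ℝ) where
  nonneg x y := ENNReal.toReal_nonneg
  le_one x y := by
    rw [waps_clDist_eq]
    exact ENNReal.toReal_le_of_le_ofReal zero_le_one (by simp)
  self x := by simp [waps_clDist_eq]
  symm x y := by rw [waps_clDist_eq, waps_clDist_eq, edist_comm]
  tri x y z := by
    rw [waps_clDist_eq, waps_clDist_eq, waps_clDist_eq]
    have hf : ∀ e : ℝ≥0∞, min 1 e ≠ ∞ := fun e =>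
      ne_top_of_le_ne_top ENNReal.one_ne_top (min_le_left _ _)
    rw [← ENNReal.toReal_add (hf _) (hf _)]
    refine ENNReal.toReal_mono (ENNReal.add_ne_top.2 ⟨hf _, hf _⟩) ?_
    rcases le_total 1 (edist x y) with h | h
    · rw [min_eq_left h]; exact (min_le_left _ _).trans le_self_add
    rcases le_total 1 (edist y z) with h' | h'
    · rw [min_eq_left h']; exact (min_le_left _ _).trans le_add_self
    rw [min_eq_right h, min_eq_right h']
    exact (min_le_right _ _).trans (edist_triangle _ _ _)
  cont := by
    have h1 : Continuous fun p : Closeds U × Closeds U => min 1 (edist p.1 p.2) :=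
      continuous_const.min (continuous_fst.edist continuous_snd)
    rw [continuous_iff_continuousAt]
    intro p
    exact (ENNReal.tendsto_toReal (ne_top_of_le_ne_top ENNReal.one_ne_top (min_le_left _ _))).comp
      h1.continuousAt

/-- Maximum distance on a product. -/
noncomputable def wapsProd {α β : Type*} (d : α → α → ℝ) (e : β → β → ℝ) (p q : α × β) : ℝ :=
  max (d p.1 q.1) (e p.2 q.2)

theorem wapsProd_dist {α β : Type*} [TopologicalSpace α] [TopologicalSpace β] {d : α → α → ℝ}
    {e : β → β → ℝ} (hd : WapsDist d) (he : WapsDist e) : WapsDist (wapsProd d e) where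
  nonneg x y := le_max_of_le_left (hd.nonneg _ _)
  le_one x y := max_le (hd.le_one _ _) (he.le_one _ _)
  self x := by simp [wapsProd, hd.self, he.self]
  symm x y := by simp only [wapsProd, hd.symm x.1 y.1, he.symm x.2 y.2]
  tri x y z := by
    refine max_le ?_ ?_
    · exact (hd.tri _ y.1 _).trans (add_le_add (le_max_left _ _) (le_max_left _ _))
    · exact (he.tri _ y.2 _).trans (add_le_add (le_max_right _ _) (le_max_right _ _))
  cont := by
    unfold wapsProd
    refine Continuous.max ?_ ?_
    · exact hd.cont.comp ((continuous_fst.comp continuous_fst).prodMk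
        (continuous_fst.comp continuous_snd))
    · exact he.cont.comp ((continuous_snd.comp continuous_fst).prodMk
        (continuous_snd.comp continuous_snd))

/-- `v` is measurable and controlled by the cost `a`. -/
def WapsNice {α : Type*} [TopologicalSpace α] (a : ℝ → ℝ → ℝ≥0∞) (d : α → α → ℝ) (v : ℝ → α) :
    Prop := AEStronglyMeasurable v ∧ WapsCtrl a (wapsC d v)

/-- The cost `a` is almost periodic. -/
def WapsAPC (a : ℝ → ℝ → ℝ≥0∞) : Prop :=
  ∀ ε : ℝ≥0∞, 0 < ε → ∃ l > 0, RelDense {τ | wapsA l (a τ) < ε}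

theorem WapsNice.ap {α : Type*} [TopologicalSpace α] {a : ℝ → ℝ → ℝ≥0∞} {d : α → α → ℝ} {v : ℝ → α}
    (h : WapsNice a d v) (ha : WapsAPC a) : WapsAP d v := by
  intro ε hε
  obtain ⟨δ, hδ, h⟩ := h.2 ε hε
  obtain ⟨l, hl, hr⟩ := ha δ hδ
  obtain ⟨L, hL, h⟩ := h l hl
  exact ⟨L, hL, hr.waps_mono fun τ hτ => h L le_rfl τ hτ⟩

theorem wapsC_prod_le {α β : Type*} {d : α → α → ℝ} {e : β → β → ℝ} (v : ℝ → α) (w : ℝ → β)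
    (τ t : ℝ) :
    wapsC (wapsProd d e) (fun t => (v t, w t)) τ t ≤ wapsC d v τ t + wapsC e w τ t := by
  simp only [wapsC, wapsProd]
  rw [ENNReal.ofReal_max]
  exact max_le le_self_add le_add_self

theorem WapsNice.prod {α β : Type*} [TopologicalSpace α] [TopologicalSpace β]
    {a : ℝ → ℝ → ℝ≥0∞} {d : α → α → ℝ} {e : β → β → ℝ} (hd : WapsDist d)
    {v : ℝ → α} {w : ℝ → β} (hv : WapsNice a d v) (hw : WapsNice a e w) :
    WapsNice a (wapsProd d e) (fun t => (v t, w t)) := by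
  refine ⟨hv.1.prodMk hw.1, (hv.2.add hw.2 (wapsC_meas hd hv.1)).mono fun τ =>
    ae_of_all _ fun t => wapsC_prod_le _ _ _ _⟩

theorem waps_cl_lt {U : Type*} [MetricSpace U] {A B : Closeds U} {δ : ℝ} (hδ : δ ≤ 1)
    (h : clDist A B < δ) : Metric.hausdorffEDist (A : Set U) B ≠ ∞ ∧
      Metric.hausdorffDist (A : Set U) B < δ := by
  rw [waps_clDist_eq, Closeds.edist_eq] at h
  have h1 : Metric.hausdorffEDist (A : Set U) B < 1 := by
    by_contra! h2
    rw [min_eq_left h2] at h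
    norm_num at h; linarith
  rw [min_eq_right h1.le] at h
  exact ⟨(h1.trans ENNReal.one_lt_top).ne, h⟩

/-- The truncated distance to a set is Lipschitz. -/
theorem waps_phi_lip {U : Type*} [MetricSpace U] (p q : U × Closeds U) :
    |min 1 (Metric.infDist p.1 p.2) - min 1 (Metric.infDist q.1 q.2)|
      ≤ 2 * wapsProd bdist clDist p q := by
  have hone : ∀ x y : ℝ, 0 ≤ x → 0 ≤ y → |min 1 x - min 1 y| ≤ 1 := by
    intro x y hx hy
    have h1 := le_min zero_le_one hx
    have h2 := le_min zero_le_one hy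
    rw [abs_le]
    constructor <;> linarith [min_le_left 1 x, min_le_left 1 y]
  have h0 := hone _ _ (Metric.infDist_nonneg (x := p.1) (s := p.2))
    (Metric.infDist_nonneg (x := q.1) (s := q.2))
  rcases le_or_gt 1 (bdist p.1 q.1) with h1 | h1
  · have : 1 ≤ wapsProd bdist clDist p q := le_max_of_le_left h1
    linarith
  rcases le_or_gt 1 (clDist p.2 q.2) with h2 | h2
  · have : 1 ≤ wapsProd bdist clDist p q := le_max_of_le_right h2
    linarith
  obtain ⟨h3, -⟩ := waps_cl_lt le_rfl h2
  have h4 : Metric.hausdorffDist (p.2 : Set U) q.2 = clDist p.2 q.2 := by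
    rw [waps_clDist_eq, Closeds.edist_eq, min_eq_right]
    · rfl
    · by_contra! h5
      rw [waps_clDist_eq, Closeds.edist_eq, min_eq_left h5.le] at h2
      norm_num at h2
  have h5 : dist p.1 q.1 = bdist p.1 q.1 := by
    simp only [bdist] at h1 ⊢
    rcases min_lt_iff.1 h1 with h | h
    · exact absurd h (lt_irrefl _)
    · rw [min_eq_right h.le]
  have h6 : dist p.1 q.1 ≤ wapsProd bdist clDist p q := by rw [h5]; exact le_max_left _ _
  have h7 : Metric.hausdorffDist (p.2 : Set U) q.2 ≤ wapsProd bdist clDist p q := by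
    rw [h4]; exact le_max_right _ _
  have h3' : Metric.hausdorffEDist (q.2 : Set U) p.2 ≠ ∞ := by rwa [Metric.hausdorffEDist_comm]
  have h8 := Metric.infDist_le_infDist_add_hausdorffDist (x := q.1) h3
  have h9 := Metric.infDist_le_infDist_add_hausdorffDist (x := p.1) h3'
  rw [Metric.hausdorffDist_comm] at h9
  have h10 := Metric.infDist_le_infDist_add_dist (s := (p.2 : Set U)) (x := q.1) (y := p.1)
  have h11 := Metric.infDist_le_infDist_add_dist (s := (q.2 : Set U)) (x := p.1) (y := q.1)
  rw [dist_comm] at h10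
  refine (abs_min_sub_min_le_max 1 _ 1 _).trans ?_
  rw [sub_self, abs_zero, max_eq_right (abs_nonneg _), abs_le]
  constructor <;> linarith

theorem waps_phi_cont {U : Type*} [MetricSpace U] :
    Continuous fun p : U × Closeds U => min 1 (Metric.infDist p.1 p.2) := by
  have hd := wapsProd_dist (waps_bdist_dist U) (waps_clDist_dist U)
  rw [continuous_iff_continuousAt]
  intro p
  rw [ContinuousAt, tendsto_iff_dist_tendsto_zero]
  have h1 : Tendsto (fun q => 2 * wapsProd bdist clDist q p) (𝓝 p) (𝓝 0) := by
    have h2 : Continuous fun q => 2 * wapsProd bdist clDist q p :=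
      continuous_const.mul (hd.cont.comp (continuous_id.prodMk continuous_const))
    have := h2.tendsto p
    rwa [hd.self, mul_zero] at this
  exact squeeze_zero (fun _ => dist_nonneg) (fun q => waps_phi_lip q p) h1

theorem waps_nice_comp {U : Type*} [PseudoMetricSpace U] {a : ℝ → ℝ → ℝ≥0∞} {p : ℝ → ℕ}
    (hp : Measurable p) (hc : WapsCtrl a (wapsC wapsDisc p)) (y : ℕ → U) :
    WapsNice a bdist (fun t => y (p t)) := by
  constructor
  · exact ((continuous_of_discreteTopology (f := y)).comp_stronglyMeasurable
      hp.stronglyMeasurable).aestronglyMeasurable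
  · refine hc.mono fun τ => ae_of_all _ fun t => ENNReal.ofReal_le_ofReal ?_
    change bdist (y (p t)) (y (p (t + τ))) ≤ wapsDisc (p t) (p (t + τ))
    by_cases h : p t = p (t + τ)
    · rw [← h, (waps_bdist_dist U).self, wapsDisc_self]
    · rw [wapsDisc_ne h]; exact (waps_bdist_dist U).le_one _ _

theorem waps_lemA {U : Type*} [MetricSpace U] {a : ℝ → ℝ → ℝ≥0∞} (ha : WapsAPC a)
    {F : ℝ → Closeds U} (hFne : ∀ t : ℝ, (F t : Set U).Nonempty) (hF : WapsNice a clDist F)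
    (h : ℝ → U) (hh : WapsNice a bdist h) (ε : ℝ) (hε : 0 < ε) (hε1 : ε ≤ 1) :
    ∃ h' : ℝ → U, WapsNice a bdist h' ∧ ∀ᵐ t, Metric.infDist (h' t) (F t) ≤ ε ∧
      dist (h' t) (h t) ≤ Metric.infDist (h t) (F t) + ε := by
  classical
  have hz := hh.prod (waps_bdist_dist U) hF
  obtain ⟨p, hp, c, hc, hctrl⟩ := waps_partition
    (wapsProd_dist (waps_bdist_dist U) (waps_clDist_dist U)) hz.1 (hz.ap ha) (ε / 4) (by linarith)
  have hy : ∀ i, ∃ y : U, ((c i).2 : Set U).Nonempty → y ∈ ((c i).2 : Set U) ∧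
      dist (c i).1 y < Metric.infDist (c i).1 (c i).2 + ε / 4 := by
    intro i
    by_cases hne : ((c i).2 : Set U).Nonempty
    · obtain ⟨y, hy1, hy2⟩ := (Metric.infDist_lt_iff hne).1
        (show Metric.infDist (c i).1 (c i).2 < Metric.infDist (c i).1 (c i).2 + ε / 4 by linarith)
      exact ⟨y, fun _ => ⟨hy1, hy2⟩⟩
    · exact ⟨(c i).1, fun h => absurd h hne⟩
  choose y hy using hy
  refine ⟨fun t => y (p t), waps_nice_comp hp (hz.2.trans hctrl) y, ?_⟩
  filter_upwards [hc] with t ht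
  have h1 : bdist (h t) (c (p t)).1 < ε / 4 := (le_max_left _ _).trans_lt ht
  have h2 : clDist (F t) (c (p t)).2 < ε / 4 := (le_max_right _ _).trans_lt ht
  obtain ⟨h3, h4⟩ := waps_cl_lt (by linarith) h2
  have h5 : dist (h t) (c (p t)).1 < ε / 4 := by
    simp only [bdist] at h1
    rcases min_lt_iff.1 h1 with h | h
    · linarith
    · exact h
  obtain ⟨hy1, hy2⟩ := hy (p t) (Metric.nonempty_of_hausdorffEDist_ne_top (hFne t) h3)
  have h3' : Metric.hausdorffEDist ((c (p t)).2 : Set U) (F t) ≠ ∞ := by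
    rwa [Metric.hausdorffEDist_comm]
  constructor
  · have := Metric.infDist_le_hausdorffDist_of_mem hy1 h3'
    rw [Metric.hausdorffDist_comm] at this
    linarith
  · have h6 := Metric.infDist_le_infDist_add_hausdorffDist (x := (c (p t)).1) h3
    have h7 := Metric.infDist_le_infDist_add_dist (s := (F t : Set U)) (x := (c (p t)).1) (y := h t)
    have h8 := dist_triangle (y (p t)) (c (p t)).1 (h t)
    rw [dist_comm (y (p t)) (c (p t)).1] at h8
    rw [dist_comm (h t)] at h5
    linarith

theorem waps_limit {U : Type*} [MetricSpace U] [CompleteSpace U] {a : ℝ → ℝ → ℝ≥0∞}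
    (h : ℕ → ℝ → U) (hh : ∀ n, WapsNice a bdist (h n)) (K : ℝ) (hK : 0 ≤ K)
    (hd : ∀ᵐ t, ∀ n, dist (h n t) (h (n + 1) t) ≤ K * (1 / 2) ^ n) :
    ∃ f : ℝ → U, WapsNice a bdist f ∧ ∀ᵐ t, Tendsto (fun n => h n t) atTop (𝓝 (f t)) ∧
      ∀ n, dist (h n t) (f t) ≤ 2 * K * (1 / 2) ^ n := by
  obtain ⟨f, hf, hlim⟩ := exists_stronglyMeasurable_limit_of_tendsto_ae
    (fun n => (hh n).1) (by
      filter_upwards [hd] with t ht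
      exact cauchySeq_tendsto_of_complete (cauchySeq_of_le_geometric (1 / 2) K (by norm_num) ht))
  have hb : ∀ᵐ t, ∀ n, dist (h n t) (f t) ≤ 2 * K * (1 / 2) ^ n := by
    filter_upwards [hd, hlim] with t ht h1 n
    refine (dist_le_of_le_geometric_of_tendsto (1 / 2) K (by norm_num) ht h1 n).trans (le_of_eq ?_)
    norm_num; ring
  refine ⟨f, ⟨hf.aestronglyMeasurable, ?_⟩, hlim.and hb⟩
  refine waps_crit fun ε hε => ?_
  obtain ⟨q, hq, hqε⟩ := waps_exists_real hε
  obtain ⟨n, hn⟩ : ∃ n : ℕ, 4 * K * (1 / 2 : ℝ) ^ n < q := by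
    have h1 : Tendsto (fun n : ℕ => 4 * K * (1 / 2 : ℝ) ^ n) atTop (𝓝 (4 * K * 0)) :=
      (tendsto_pow_atTop_nhds_zero_of_lt_one (by norm_num) (by norm_num)).const_mul _
    rw [mul_zero] at h1
    exact (h1.eventually_lt_const hq).exists
  refine ⟨wapsC bdist (h n), fun _ => ENNReal.ofReal (4 * K * (1 / 2 : ℝ) ^ n), (hh n).2,
    wapsC_meas (waps_bdist_dist U) (hh n).1, ⟨1, one_pos, fun L hL => ?_⟩, fun τ => ?_⟩
  · rw [wapsA_const (by linarith)]
    exact ((ENNReal.ofReal_lt_ofReal_iff hq).2 hn).trans_le hqε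
  · filter_upwards [hb, waps_ae_shift hb τ] with t h1 h2
    simp only [wapsC]
    rw [← ENNReal.ofReal_add ((waps_bdist_dist U).nonneg _ _) (by positivity)]
    refine ENNReal.ofReal_le_ofReal ?_
    have h3 := h1 n
    have h4 := h2 n
    have h5 := dist_triangle4 (f t) (h n t) (h n (t + τ)) (f (t + τ))
    rw [dist_comm (f t) (h n t)] at h5
    simp only [bdist]
    rw [← min_add_add_right]
    refine min_le_min ?_ (by linarith)
    have : 0 ≤ 4 * K * (1 / 2 : ℝ) ^ n := by positivity
    linarith

theorem waps_approx_sel {U : Type*} [MetricSpace U] [CompleteSpace U] {a : ℝ → ℝ → ℝ≥0∞}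
    (ha : WapsAPC a) {F : ℝ → Closeds U} (hFne : ∀ t : ℝ, (F t : Set U).Nonempty)
    (hF : WapsNice a clDist F) (g : ℝ → U) (hg : WapsNice a bdist g) (ε : ℝ) (hε : 0 < ε)
    (hε1 : ε ≤ 1) :
    ∃ f : ℝ → U, WapsNice a bdist f ∧ ∀ᵐ t, f t ∈ (F t : Set U) ∧
      dist (f t) (g t) ≤ Metric.infDist (g t) (F t) + ε := by
  have hA : ∀ (h : ℝ → U) (n : ℕ), ∃ h' : ℝ → U, WapsNice a bdist h → (WapsNice a bdist h' ∧
      ∀ᵐ t, Metric.infDist (h' t) (F t) ≤ ε / 8 * (1 / 2) ^ n ∧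
      dist (h' t) (h t) ≤ Metric.infDist (h t) (F t) + ε / 8 * (1 / 2) ^ n) := by
    intro h n
    by_cases hh : WapsNice a bdist h
    · have hp : (1 / 2 : ℝ) ^ n ≤ 1 := pow_le_one₀ (by norm_num) (by norm_num)
      have hp0 : 0 < (1 / 2 : ℝ) ^ n := by positivity
      obtain ⟨h', h1⟩ := waps_lemA ha hFne hF h hh (ε / 8 * (1 / 2) ^ n) (by positivity)
        (by nlinarith)
      exact ⟨h', fun _ => h1⟩
    · exact ⟨h, fun h => absurd h hh⟩
  choose A hA using hA
  let H : ℕ → ℝ → U := fun n => Nat.rec (A g 0) (fun n h => A h (n + 1)) n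
  have hH0 : H 0 = A g 0 := rfl
  have hHs : ∀ n, H (n + 1) = A (H n) (n + 1) := fun n => rfl
  have hn : ∀ n, WapsNice a bdist (H n) := by
    intro n
    induction n with
    | zero => exact (hA g 0 hg).1
    | succ n ih => exact (hA (H n) (n + 1) ih).1
  have hinf : ∀ᵐ t, ∀ n, Metric.infDist (H n t) (F t) ≤ ε / 8 * (1 / 2) ^ n := by
    rw [ae_all_iff]
    intro n
    cases n with
    | zero => exact (hA g 0 hg).2.mono fun t h => h.1
    | succ n => exact (hA (H n) (n + 1) (hn n)).2.mono fun t h => h.1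
  have hdist : ∀ᵐ t, ∀ n, dist (H n t) (H (n + 1) t) ≤ ε / 4 * (1 / 2) ^ n := by
    have h1 : ∀ᵐ t, ∀ n, dist (H (n + 1) t) (H n t) ≤
        Metric.infDist (H n t) (F t) + ε / 8 * (1 / 2) ^ (n + 1) := by
      rw [ae_all_iff]
      exact fun n => (hA (H n) (n + 1) (hn n)).2.mono fun t h => h.2
    filter_upwards [h1, hinf] with t h2 h3 n
    have h4 := h2 n
    have h5 := h3 n
    rw [pow_succ] at h4
    rw [dist_comm]
    have : 0 < ε / 8 * (1 / 2 : ℝ) ^ n := by positivity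
    nlinarith
  obtain ⟨f, hf, hlim⟩ := waps_limit H hn (ε / 4) (by positivity) hdist
  refine ⟨f, hf, ?_⟩
  filter_upwards [hlim, hinf, (hA g 0 hg).2] with t h1 h2 h3
  constructor
  · rw [(F t).isClosed.mem_iff_infDist_zero (hFne t)]
    refine le_antisymm ?_ Metric.infDist_nonneg
    have h4 : Tendsto (fun n => Metric.infDist (H n t) (F t)) atTop
        (𝓝 (Metric.infDist (f t) (F t))) :=
      ((Metric.continuous_infDist_pt _).tendsto _).comp h1.1
    have h5 : Tendsto (fun n : ℕ => ε / 8 * (1 / 2 : ℝ) ^ n) atTop (𝓝 (ε / 8 * 0)) :=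
      (tendsto_pow_atTop_nhds_zero_of_lt_one (by norm_num) (by norm_num)).const_mul _
    rw [mul_zero] at h5
    exact le_of_tendsto_of_tendsto' h4 h5 h2
  · have h4 := h1.2 0
    have h5 := h3.2
    rw [← hH0] at h5
    have h6 := dist_triangle (f t) (H 0 t) (g t)
    rw [dist_comm (f t) (H 0 t)] at h6
    norm_num at h4 h5
    linarith

theorem waps_bool_nice {α : Type*} [TopologicalSpace α] {a : ℝ → ℝ → ℝ≥0∞} {d : α → α → ℝ}
    (hd : WapsDist d) {w : ℝ → α} (hw : WapsNice a d w) (C : ℝ) (hC : 0 ≤ C) (u : ℝ → ℝ)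
    (hum : AEMeasurable u) (hu : ∀ t s, |u t - u s| ≤ C * d (w t) (w s)) (r : ℝ)
    (hr : ∀ ε : ℝ≥0∞, 0 < ε → ∃ δ > 0, WapsSm ε (Set.indicator {t | |u t - r| < δ} 1)) :
    WapsNice a wapsDisc (fun t => decide (r ≤ u t)) := by
  constructor
  · have h1 : Measurable fun x : ℝ => decide (r ≤ x) := by
      refine measurable_to_bool ?_
      have : (fun x : ℝ => decide (r ≤ x)) ⁻¹' {true} = Set.Ici r := by
        ext x; simp
      rw [this]; exact measurableSet_Ici
    exact (h1.comp_aemeasurable hum).aestronglyMeasurable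
  · refine waps_crit fun ε hε => ?_
    obtain ⟨δ, hδ, h⟩ := hr ε hε
    refine ⟨fun τ t => ENNReal.ofReal (C / δ) * wapsC d w τ t, _,
      hw.2.const_mul ENNReal.ofReal_ne_top,
      fun τ => (wapsC_meas hd hw.1 τ).const_mul _, h, fun τ => ae_of_all _ fun t => ?_⟩
    by_cases h1 : |u t - r| < δ
    · rw [Set.indicator_of_mem (by exact h1)]
      refine le_trans ?_ le_add_self
      exact (wapsC_le_one (wapsDisc_dist Bool) _ _ _)
    refine le_trans ?_ le_self_add
    change ENNReal.ofReal (wapsDisc (decide (r ≤ u t)) (decide (r ≤ u (t + τ)))) ≤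
      ENNReal.ofReal (C / δ) * ENNReal.ofReal (d (w t) (w (t + τ)))
    rw [← ENNReal.ofReal_mul (by positivity)]
    refine ENNReal.ofReal_le_ofReal ?_
    have h2 := hu t (t + τ)
    have h3 := hd.nonneg (w t) (w (t + τ))
    by_cases h4 : decide (r ≤ u t) = decide (r ≤ u (t + τ))
    · rw [h4, wapsDisc_self]; positivity
    · rw [wapsDisc_ne h4]
      have h5 : δ ≤ |u t - u (t + τ)| := by
        push Not at h1
        have h6 : ¬ ((r ≤ u t) ↔ (r ≤ u (t + τ))) := fun h => h4 (decide_eq_decide.2 h)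
        by_cases h7 : r ≤ u t
        · have h8 : u (t + τ) < r := by by_contra! h9; exact h6 ⟨fun _ => h9, fun _ => h7⟩
          rw [abs_of_nonneg (by linarith)] at h1
          exact le_trans (by linarith) (le_abs_self _)
        · have h8 : r ≤ u (t + τ) := by
            by_contra h9; exact h6 ⟨fun h => absurd h h7, fun h => absurd h h9⟩
          push Not at h7
          rw [abs_of_nonpos (by linarith)] at h1
          exact le_trans (by linarith) (neg_le_abs _)
      rw [div_mul_eq_mul_div, le_div_iff₀ hδ]; linarith

theorem waps_patch {U : Type*} [TopologicalSpace U] {a : ℝ → ℝ → ℝ≥0∞} {d : U → U → ℝ}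
    (hd : WapsDist d) {χ : ℝ → Bool} (hχ : WapsNice a wapsDisc χ) {f g : ℝ → U}
    (hf : WapsNice a d f) (hg : WapsNice a d g) :
    WapsNice a d (fun t => cond (χ t) (f t) (g t)) := by
  constructor
  · have hc : Continuous fun p : Bool × U × U => cond p.1 p.2.1 p.2.2 := by
      rw [continuous_prod_of_discrete_left]
      intro b
      cases b
      · exact continuous_snd
      · exact continuous_fst
    exact hc.comp_aestronglyMeasurable (hχ.1.prodMk (hf.1.prodMk hg.1))
  · refine ((hχ.2.add hf.2 (wapsC_meas (wapsDisc_dist Bool) hχ.1)).add hg.2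
      (fun τ => (wapsC_meas (wapsDisc_dist Bool) hχ.1 τ).add (wapsC_meas hd hf.1 τ))).mono
      fun τ => ae_of_all _ fun t => ?_
    change ENNReal.ofReal (d (cond (χ t) (f t) (g t))
      (cond (χ (t + τ)) (f (t + τ)) (g (t + τ)))) ≤ ENNReal.ofReal (wapsDisc (χ t) (χ (t + τ))) +
      ENNReal.ofReal (d (f t) (f (t + τ))) + ENNReal.ofReal (d (g t) (g (t + τ)))
    by_cases h : χ t = χ (t + τ)
    · rw [← h]
      cases χ t
      · exact le_add_self
      · exact le_add_self.trans le_self_add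
    · rw [wapsDisc_ne h]
      exact (ENNReal.ofReal_le_ofReal (hd.le_one _ _)).trans (le_self_add.trans le_self_add)

theorem waps_selection {U : Type*} [MetricSpace U] [CompleteSpace U] {a : ℝ → ℝ → ℝ≥0∞}
    (ha : WapsAPC a) {F : ℝ → Closeds U} (hFne : ∀ t : ℝ, (F t : Set U).Nonempty)
    (hF : WapsNice a clDist F) (g : ℝ → U) (hg : WapsNice a bdist g)
    (η : ℝ → ℝ) (hηmono : StrictMonoOn η (Set.Ici 0)) (hη0 : η 0 = 0)
    (hηpos : ∀ t > (0 : ℝ), 0 < η t) :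
    ∃ f : ℝ → U, WapsNice a bdist f ∧ ∀ᵐ t, f t ∈ (F t : Set U) ∧
      dist (f t) (g t) ≤ Metric.infDist (g t) (F t) + η (Metric.infDist (g t) (F t)) := by
  have hd := wapsProd_dist (waps_bdist_dist U) (waps_clDist_dist U)
  have hz := hg.prod (waps_bdist_dist U) hF
  set u : ℝ → ℝ := fun t => min 1 (Metric.infDist (g t) (F t)) with hu
  have hulip : ∀ t s, |u t - u s| ≤ 2 * wapsProd bdist clDist (g t, F t) (g s, F s) :=
    fun t s => waps_phi_lip (g t, F t) (g s, F s)
  have hum : AEMeasurable u :=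
    (waps_phi_cont.comp_aestronglyMeasurable hz.1).aemeasurable
  have hth : ∀ k : ℕ, ∃ r, (1 / 2 : ℝ) ^ (k + 2) < r ∧ r < (1 / 2 : ℝ) ^ (k + 1) ∧
      ∀ ε : ℝ≥0∞, 0 < ε → ∃ δ > 0, WapsSm ε (Set.indicator {t | |u t - r| < δ} 1) := by
    intro k
    refine waps_threshold hd hz.1 (hz.ap ha) 2 (by norm_num) u hulip _ _ ?_
    exact pow_lt_pow_right_of_lt_one₀ (by norm_num) (by norm_num) (by omega)
  choose c hc1 hc2 hc3 using hth
  have hcpos : ∀ k, 0 < c k := fun k => lt_trans (by positivity) (hc1 k)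
  have hcs : ∀ k, c (k + 1) < c k := fun k => (hc2 (k + 1)).trans (hc1 k)
  have hchalf : ∀ k, c k < 1 / 2 := fun k => (hc2 k).trans_le (by
    rw [pow_succ]
    have : (1 / 2 : ℝ) ^ k ≤ 1 := pow_le_one₀ (by norm_num) (by norm_num)
    linarith)
  have hchi : ∀ k, WapsNice a wapsDisc (fun t => decide (c k ≤ u t)) := fun k =>
    waps_bool_nice hd hz 2 (by norm_num) u hum hulip (c k) (hc3 k)
  have hsel : ∀ k, ∃ f : ℝ → U, WapsNice a bdist f ∧ ∀ᵐ t, f t ∈ (F t : Set U) ∧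
      dist (f t) (g t) ≤ Metric.infDist (g t) (F t) + min (η (c k)) (c k) := fun k =>
    waps_approx_sel ha hFne hF g hg _ (lt_min (hηpos _ (hcpos k)) (hcpos k))
      ((min_le_right _ _).trans (by linarith [hchalf k]))
  choose φ hφn hφ using hsel
  have hφ' := ae_all_iff.2 hφ
  let H : ℕ → ℝ → U := fun n => Nat.rec (fun t => cond (decide (c 0 ≤ u t)) (φ 0 t) (g t))
    (fun n h t => cond (decide (c n ≤ u t)) (h t)
      (cond (decide (c (n + 1) ≤ u t)) (φ (n + 1) t) (g t))) n
  have hH0 : ∀ t, H 0 t = cond (decide (c 0 ≤ u t)) (φ 0 t) (g t) := fun t => rfl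
  have hHs : ∀ n t, H (n + 1) t = cond (decide (c n ≤ u t)) (H n t)
      (cond (decide (c (n + 1) ≤ u t)) (φ (n + 1) t) (g t)) := fun n t => rfl
  have hn : ∀ n, WapsNice a bdist (H n) := by
    intro n
    induction n with
    | zero => exact waps_patch (waps_bdist_dist U) (hchi 0) (hφn 0) hg
    | succ n ih =>
      exact waps_patch (waps_bdist_dist U) (hchi n) ih
        (waps_patch (waps_bdist_dist U) (hchi (n + 1)) (hφn (n + 1)) hg)
  have hlow : ∀ n t, u t < c n → H n t = g t := by
    intro n t h
    cases n with
    | zero => rw [hH0, decide_eq_false (not_le.2 h), cond_false]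
    | succ n =>
      rw [hHs, decide_eq_false (not_le.2 h), decide_eq_false (not_le.2 (h.trans (hcs n))),
        cond_false, cond_false]
  have hb : ∀ k t, c k ≤ u t → (φ k t ∈ (F t : Set U) ∧
      dist (φ k t) (g t) ≤ Metric.infDist (g t) (F t) + min (η (c k)) (c k)) →
      dist (φ k t) (g t) ≤ Metric.infDist (g t) (F t) + η (Metric.infDist (g t) (F t)) := by
    intro k t h h'
    have h1 : c k ≤ Metric.infDist (g t) (F t) := h.trans (min_le_right _ _)
    have h2 : η (c k) ≤ η (Metric.infDist (g t) (F t)) :=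
      hηmono.monotoneOn (hcpos k).le Metric.infDist_nonneg h1
    linarith [h'.2, min_le_left (η (c k)) (c k)]
  have hhigh : ∀ᵐ t, ∀ n, c n ≤ u t → H n t ∈ (F t : Set U) ∧
      dist (H n t) (g t) ≤ Metric.infDist (g t) (F t) + η (Metric.infDist (g t) (F t)) := by
    filter_upwards [hφ'] with t ht n
    induction n with
    | zero =>
      intro h
      rw [hH0, decide_eq_true h, cond_true]
      exact ⟨(ht 0).1, hb 0 t h (ht 0)⟩
    | succ n ih =>
      intro h
      rw [hHs]
      by_cases h1 : c n ≤ u t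
      · rw [decide_eq_true h1, cond_true]; exact ih h1
      · rw [decide_eq_false h1, cond_false, decide_eq_true h, cond_true]
        exact ⟨(ht _).1, hb _ t h (ht _)⟩
  have hstep : ∀ᵐ t, ∀ n, dist (H n t) (H (n + 1) t) ≤ 1 * (1 / 2) ^ n := by
    filter_upwards [hφ'] with t ht n
    have hp : 0 < (1 / 2 : ℝ) ^ n := by positivity
    by_cases h1 : c n ≤ u t
    · rw [hHs, decide_eq_true h1, cond_true, dist_self]; linarith
    · rw [hlow n t (not_le.1 h1), hHs, decide_eq_false h1, cond_false]
      by_cases h2 : c (n + 1) ≤ u t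
      · rw [decide_eq_true h2, cond_true, dist_comm]
        have h3 : Metric.infDist (g t) (F t) < c n := by
          rcases min_lt_iff.1 (not_le.1 h1) with h | h
          · linarith [hchalf n]
          · exact h
        have h4 := (ht (n + 1)).2
        have h5 := hc2 n
        rw [pow_succ] at h5
        linarith [min_le_right (η (c (n + 1))) (c (n + 1)), hcs n]
      · rw [decide_eq_false h2, cond_false, dist_self]; linarith
  obtain ⟨f, hf, hlim⟩ := waps_limit H hn 1 zero_le_one hstep
  refine ⟨f, hf, ?_⟩
  filter_upwards [hlim, hhigh] with t h1 h2
  have hu0 : 0 ≤ u t := le_min zero_le_one Metric.infDist_nonneg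
  rcases hu0.eq_or_lt with h3 | h3
  · have h4 : ∀ n, H n t = g t := fun n => hlow n t (h3 ▸ hcpos n)
    have h5 : f t = g t := by
      refine tendsto_nhds_unique h1.1 ?_
      simp only [h4]; exact tendsto_const_nhds
    have h6 : Metric.infDist (g t) (F t) = 0 := by
      rcases min_choice 1 (Metric.infDist (g t) (F t)) with h | h
      · have : u t = 1 := h
        linarith
      · exact h.symm.trans h3.symm
    rw [h5, h6, dist_self, hη0]
    exact ⟨((F t).isClosed.mem_iff_infDist_zero (hFne t)).2 h6, by norm_num⟩
  · have h4 : ∀ᶠ n in atTop, c n ≤ u t := by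
      have h5 : Tendsto (fun n : ℕ => (1 / 2 : ℝ) ^ n) atTop (𝓝 0) :=
        tendsto_pow_atTop_nhds_zero_of_lt_one (by norm_num) (by norm_num)
      filter_upwards [h5.eventually_lt_const h3] with n hn
      have h6 := hc2 n
      rw [pow_succ] at h6
      have : 0 < (1 / 2 : ℝ) ^ n := by positivity
      linarith
    constructor
    · exact (F t).isClosed.mem_of_tendsto h1.1 (h4.mono fun n hn => (h2 n hn).1)
    · exact le_of_tendsto (h1.1.dist tendsto_const_nhds) (h4.mono fun n hn => (h2 n hn).2)

theorem waps_joint_ap {α β : Type*} [TopologicalSpace α] [TopologicalSpace β]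
    {d : α → α → ℝ} {e : β → β → ℝ} (hd : WapsDist d) (he : WapsDist e) {v : ℝ → α} {w : ℝ → β}
    (hv : AEStronglyMeasurable v) (hw : AEStronglyMeasurable w) (hva : WapsAP d v)
    (hwa : WapsAP e w) : WapsAP (wapsProd d e) (fun t => (v t, w t)) := by
  intro ε hε
  obtain ⟨q, hq, hqε⟩ := waps_exists_real hε
  set x := ENNReal.ofReal (q / 5) with hx
  have hx0 : 0 < x := by rw [hx, ENNReal.ofReal_pos]; positivity
  have hxε : (x + x) + (x + x + x) ≤ ε := by
    refine le_trans (le_of_eq ?_) hqε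
    rw [hx]
    have h5 : 0 ≤ q / 5 := by positivity
    rw [← ENNReal.ofReal_add h5 h5, ← ENNReal.ofReal_add (by positivity) h5,
      ← ENNReal.ofReal_add (by positivity) (by positivity)]
    congr 1; ring
  obtain ⟨l₁, hl₁, h1⟩ := hva (x / 2) (waps_half hx0)
  obtain ⟨l₂, hl₂, h2⟩ := hwa (x / 2) (waps_half hx0)
  obtain ⟨l₃, hl₃, r, hr, h3⟩ := waps_cont he hw hwa (x / 2) (waps_half hx0)
  set L := max l₁ (max l₂ l₃) with hL
  have hL0 : 0 < L := lt_max_of_lt_left hl₁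
  have key := waps_jj (fun τ => wapsA L (wapsC d v τ)) (fun τ => wapsA L (wapsC e w τ))
    (wapsAC_add hd hv L) (wapsAC_add he hw L) (wapsAC_neg hd v L) (wapsAC_neg he w L) x
    (h1.waps_mono fun τ h => (wapsA_long hl₁ (le_max_left _ _) _).trans_lt (waps_two_mul_half h))
    (h2.waps_mono fun τ h => (wapsA_long hl₂ ((le_max_left _ _).trans (le_max_right _ _)) _).trans_lt
      (waps_two_mul_half h)) hr
    (fun s hs => (wapsA_long hl₃ ((le_max_right _ _).trans (le_max_right _ _)) _).trans_lt
      (waps_two_mul_half (h3 s hs)))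
  refine ⟨L, hL0, key.waps_mono fun τ h => ?_⟩
  refine lt_of_lt_of_le ?_ hxε
  refine lt_of_le_of_lt ?_ (ENNReal.add_lt_add h.1 h.2)
  exact (wapsA_mono (ae_of_all _ fun t => wapsC_prod_le v w τ t)).trans
    (wapsA_add (wapsC_meas hd hv τ))

/-- The Weyl seminorm of a translation. -/
noncomputable def wapsK {α : Type*} (d : α → α → ℝ) (w : ℝ → α) (τ : ℝ) : ℝ≥0∞ :=
  limsup (fun l => wapsA l (wapsC d w τ)) atTop

theorem waps_weylDinf {α : Type*} (d : α → α → ℝ) (τ : ℝ) (f : ℝ → α) :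
    weylDinf d 1 f (fun t => f (t + τ)) = wapsK d f τ := by
  simp only [weylDinf, wapsK, waps_weylD]

theorem wapsK_le_of {α : Type*} {d : α → α → ℝ} {w : ℝ → α} {τ : ℝ} {x : ℝ≥0∞}
    (h : ∀ᶠ l in atTop, wapsA l (wapsC d w τ) ≤ x) : wapsK d w τ ≤ x :=
  limsup_le_of_le (by isBoundedDefault) h

theorem wapsK_lt {α : Type*} {d : α → α → ℝ} {w : ℝ → α} {τ : ℝ} {x : ℝ≥0∞}
    (h : wapsK d w τ < x) : ∀ᶠ l in atTop, wapsA l (wapsC d w τ) < x :=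
  eventually_lt_of_limsup_lt h (by isBoundedDefault)

theorem wapsK_le_two {α : Type*} {d : α → α → ℝ} {w : ℝ → α} {τ l : ℝ} (hl : 0 < l) :
    wapsK d w τ ≤ 2 * wapsA l (wapsC d w τ) := by
  refine wapsK_le_of ?_
  filter_upwards [eventually_ge_atTop l] with L hL
  exact wapsA_long hl hL _

theorem wapsK_mono {α β : Type*} {d : α → α → ℝ} {e : β → β → ℝ} {v : ℝ → α} {w : ℝ → β} {τ : ℝ}
    (h : ∀ t, wapsC d v τ t ≤ wapsC e w τ t) : wapsK d v τ ≤ wapsK e w τ :=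
  limsup_le_limsup (Eventually.of_forall fun _ => wapsA_mono (ae_of_all _ h))

theorem wapsK_le_one {α : Type*} [TopologicalSpace α] {d : α → α → ℝ} (hd : WapsDist d)
    (w : ℝ → α) (τ : ℝ) : wapsK d w τ ≤ 1 := by
  refine wapsK_le_of ?_
  filter_upwards [eventually_gt_atTop 0] with l hl
  exact wapsAC_le_one hd w hl τ

theorem wapsK_ne_top {α : Type*} [TopologicalSpace α] {d : α → α → ℝ} (hd : WapsDist d)
    (w : ℝ → α) (τ : ℝ) : wapsK d w τ ≠ ∞ :=
  ne_top_of_le_ne_top ENNReal.one_ne_top (wapsK_le_one hd w τ)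

theorem wapsK_neg {α : Type*} [TopologicalSpace α] {d : α → α → ℝ} (hd : WapsDist d)
    (w : ℝ → α) (τ : ℝ) : wapsK d w (-τ) = wapsK d w τ := by
  simp only [wapsK, wapsAC_neg hd]

theorem wapsK_zero {α : Type*} [TopologicalSpace α] {d : α → α → ℝ} (hd : WapsDist d)
    (w : ℝ → α) : wapsK d w 0 = 0 := by
  simp [wapsK, wapsAC_zero hd]

theorem wapsK_add {α : Type*} [TopologicalSpace α] {d : α → α → ℝ} (hd : WapsDist d)
    {w : ℝ → α} (hw : AEStronglyMeasurable w) (σ τ : ℝ) :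
    wapsK d w (σ + τ) ≤ wapsK d w σ + wapsK d w τ := by
  refine ENNReal.le_of_forall_pos_le_add fun ε hε _ => ?_
  have h2 : (0 : ℝ≥0∞) < ε / 2 := waps_half (by exact_mod_cast hε)
  have h3 : ∀ ρ : ℝ, wapsK d w ρ < wapsK d w ρ + ε / 2 := fun ρ =>
    ENNReal.lt_add_right (wapsK_ne_top hd w ρ) h2.ne'
  refine wapsK_le_of ?_
  filter_upwards [wapsK_lt (h3 σ), wapsK_lt (h3 τ)] with l h4 h5
  refine (wapsAC_add hd hw l σ τ).trans ((add_le_add h4.le h5.le).trans (le_of_eq ?_))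
  rw [add_add_add_comm, ENNReal.add_halves]

/-- Real valued version of `wapsK`. -/
noncomputable def wapsN {α : Type*} (d : α → α → ℝ) (w : ℝ → α) (τ : ℝ) : ℝ :=
  (wapsK d w τ).toReal

theorem wapsN_nonneg {α : Type*} (d : α → α → ℝ) (w : ℝ → α) (τ : ℝ) : 0 ≤ wapsN d w τ :=
  ENNReal.toReal_nonneg

theorem wapsN_add {α : Type*} [TopologicalSpace α] {d : α → α → ℝ} (hd : WapsDist d)
    {w : ℝ → α} (hw : AEStronglyMeasurable w) (σ τ : ℝ) :
    wapsN d w (σ + τ) ≤ wapsN d w σ + wapsN d w τ := by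
  unfold wapsN
  rw [← ENNReal.toReal_add (wapsK_ne_top hd w _) (wapsK_ne_top hd w _)]
  exact ENNReal.toReal_mono
    (ENNReal.add_ne_top.2 ⟨wapsK_ne_top hd w _, wapsK_ne_top hd w _⟩) (wapsK_add hd hw σ τ)

theorem wapsN_neg {α : Type*} [TopologicalSpace α] {d : α → α → ℝ} (hd : WapsDist d)
    (w : ℝ → α) (τ : ℝ) : wapsN d w (-τ) = wapsN d w τ := by
  simp only [wapsN, wapsK_neg hd]

theorem wapsN_zero {α : Type*} [TopologicalSpace α] {d : α → α → ℝ} (hd : WapsDist d)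
    (w : ℝ → α) : wapsN d w 0 = 0 := by
  simp [wapsN, wapsK_zero hd]

theorem wapsN_abs {α : Type*} [TopologicalSpace α] {d : α → α → ℝ} (hd : WapsDist d)
    {w : ℝ → α} (hw : AEStronglyMeasurable w) (σ τ : ℝ) :
    |wapsN d w (σ + τ) - wapsN d w σ| ≤ wapsN d w τ := by
  have h1 := wapsN_add hd hw σ τ
  have h2 := wapsN_add hd hw (σ + τ) (-τ)
  rw [wapsN_neg hd, add_neg_cancel_right] at h2
  rw [abs_le]; constructor <;> linarith

theorem wapsN_lt {α : Type*} {d : α → α → ℝ} {w : ℝ → α} {τ l ε : ℝ} (hl : 0 < l)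
    (h : wapsA l (wapsC d w τ) < ENNReal.ofReal ε / 2) : wapsN d w τ < ε := by
  have h1 := (wapsK_le_two hl).trans_lt (waps_two_mul_half h)
  exact ENNReal.toReal_lt_of_lt_ofReal h1

theorem wapsN_ap {α : Type*} {d : α → α → ℝ} {w : ℝ → α} (h : WapsAP d w) (ε : ℝ) (hε : 0 < ε) :
    RelDense {τ | wapsN d w τ < ε} := by
  obtain ⟨l, hl, hr⟩ := h (ENNReal.ofReal ε / 2) (waps_half (by simpa using hε))
  exact hr.waps_mono fun τ hτ => wapsN_lt hl hτ

theorem wapsN_cont {α : Type*} [TopologicalSpace α] {d : α → α → ℝ} (hd : WapsDist d) {w : ℝ → α}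
    (hw : AEStronglyMeasurable w) (h : WapsAP d w) (ε : ℝ) (hε : 0 < ε) :
    ∃ r > 0, ∀ s, |s| ≤ r → wapsN d w s < ε := by
  obtain ⟨l, hl, r, hr, h1⟩ := waps_cont hd hw h (ENNReal.ofReal ε / 2)
    (waps_half (by simpa using hε))
  exact ⟨r, hr, fun s hs => wapsN_lt hl (h1 s hs)⟩

theorem waps_dual_N {G : Type*} [AddCommGroup G] (N : AddGroupSeminorm G)
    (htb : ∀ ε > 0, ∃ t : Set G, t.Finite ∧ ∀ x, ∃ y ∈ t, N (x - y) < ε)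
    (N₁ N₂ : G → ℝ) (hN : ∀ x, N x = N₁ x + N₂ x) (hp1 : ∀ x, 0 ≤ N₁ x) (hp2 : ∀ x, 0 ≤ N₂ x)
    (hs1 : ∀ x y, |N₁ (x + y) - N₁ x| ≤ N₁ y) (hs2 : ∀ x y, |N₂ (x + y) - N₂ x| ≤ N₂ y)
    (e : G → ℂ) (he : ∀ x y, e (x + y) = e x * e y) (he1 : ∀ x, ‖e x‖ = 1)
    (hec : ∀ ε > 0, ∃ δ > 0, ∀ x, N x < δ → ‖e x - 1‖ < ε) :
    ∃ ψ : G → ℂ, (∀ x y, ψ (x + y) = ψ x * ψ y) ∧ (∀ x, ‖ψ x‖ = 1) ∧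
      ∃ C > 0, ∀ x, ‖ψ x - 1‖ ≤ C * N₁ x ∧ ‖ψ x - e x‖ ≤ C * N₂ x := by
  letI : SeminormedAddCommGroup G := N.toSeminormedAddCommGroup
  refine waps_dual (G := G) ?_ N₁ N₂ hN hp1 hp2 hs1 hs2 e he he1 hec
  rw [Metric.totallyBounded_iff]
  intro ε hε
  obtain ⟨t, ht, h⟩ := htb ε hε
  refine ⟨t, ht, fun x _ => ?_⟩
  obtain ⟨y, hy, hxy⟩ := h x
  refine Set.mem_biUnion hy ?_
  rw [Metric.mem_ball, dist_eq_norm]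
  exact hxy

theorem waps_tb (N : ℝ → ℝ) (ha : ∀ x y, N (x + y) ≤ N x + N y)
    (hr : ∀ ε > 0, RelDense {x | N x < ε}) (hc : ∀ ε > 0, ∃ r > 0, ∀ s, |s| ≤ r → N s < ε)
    (ε : ℝ) (hε : 0 < ε) : ∃ t : Set ℝ, t.Finite ∧ ∀ x, ∃ y ∈ t, N (x - y) < ε := by
  obtain ⟨a, ha0, h⟩ := hr (ε / 2) (by linarith)
  obtain ⟨r, hr0, hc⟩ := hc (ε / 2) (by linarith)
  refine ⟨(fun k : ℕ => (k : ℝ) * r) '' Set.Iic ⌊a / r⌋₊, (Set.finite_Iic _).image _, fun x => ?_⟩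
  obtain ⟨τ, hτ1, hτ2⟩ := h (x - a)
  have hs0 : 0 ≤ x - τ := by linarith [hτ1.2]
  have hsa : x - τ ≤ a := by linarith [hτ1.1]
  refine ⟨_, ⟨⌊(x - τ) / r⌋₊, Nat.floor_le_floor (by gcongr), rfl⟩, ?_⟩
  have h1 := Nat.floor_le (show 0 ≤ (x - τ) / r by positivity)
  have h2 := (Nat.lt_floor_add_one ((x - τ) / r)).le
  rw [le_div_iff₀ hr0] at h1
  rw [div_le_iff₀ hr0] at h2
  have h3 := hc (x - τ - ⌊(x - τ) / r⌋₊ * r) (by rw [abs_le]; constructor <;> linarith)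
  have h4 := ha τ (x - τ - ⌊(x - τ) / r⌋₊ * r)
  have h5 : N τ < ε / 2 := hτ2
  rw [show τ + (x - τ - ⌊(x - τ) / r⌋₊ * r) = x - ⌊(x - τ) / r⌋₊ * r by ring] at h4
  linarith

theorem waps_mem_WMod {α : Type*} [TopologicalSpace α] {d : α → α → ℝ} (hd : WapsDist d)
    {w : ℝ → α} {lam C : ℝ} (h : ∀ x : ℝ,
      ‖Complex.exp (Complex.I * ((lam * x : ℝ) : ℂ)) - 1‖ ≤ C * wapsN d w x) :
    lam ∈ WMod d w := by
  intro τ hτ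
  simp only [waps_weylDinf] at hτ
  rw [tendsto_iff_norm_sub_tendsto_zero]
  have h1 : Tendsto (fun j => C * wapsN d w (τ j)) atTop (𝓝 (C * 0)) :=
    ((ENNReal.tendsto_toReal ENNReal.zero_ne_top).comp hτ).const_mul C
  rw [mul_zero] at h1
  exact squeeze_zero (fun _ => norm_nonneg _) (fun j => h (τ j)) h1

theorem waps_mod {α β γ : Type*} [TopologicalSpace α] [TopologicalSpace β] [TopologicalSpace γ]
    {d : α → α → ℝ} {e : β → β → ℝ} {d' : γ → γ → ℝ} (hd : WapsDist d) (he : WapsDist e)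
    {v : ℝ → α} {w : ℝ → β} {f : ℝ → γ}
    (hv : AEStronglyMeasurable v) (hw : AEStronglyMeasurable w) (hva : WapsAP d v)
    (hwa : WapsAP e w)
    (hf : WapsCtrl (wapsC (wapsProd d e) (fun t => (v t, w t))) (wapsC d' f)) :
    WMod d' f ⊆ WMod d v + WMod e w := by
  intro lam hlam
  set z : ℝ → α × β := fun t => (v t, w t) with hz
  have hp := wapsProd_dist hd he
  have hzm : AEStronglyMeasurable z := hv.prodMk hw
  have hza : WapsAP (wapsProd d e) z := waps_joint_ap hd he hv hw hva hwa
  have hle1 : ∀ x, wapsN d v x ≤ wapsN (wapsProd d e) z x := fun x =>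
    ENNReal.toReal_mono (wapsK_ne_top hp z x) (wapsK_mono fun t =>
      ENNReal.ofReal_le_ofReal (le_max_left _ _))
  have hle2 : ∀ x, wapsN e w x ≤ wapsN (wapsProd d e) z x := fun x =>
    ENNReal.toReal_mono (wapsK_ne_top hp z x) (wapsK_mono fun t =>
      ENNReal.ofReal_le_ofReal (le_max_right _ _))
  have hadd : ∀ x y, wapsN d v (x + y) + wapsN e w (x + y) ≤
      (wapsN d v x + wapsN e w x) + (wapsN d v y + wapsN e w y) := fun x y => by
    linarith [wapsN_add hd hv x y, wapsN_add he hw x y]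
  let N : AddGroupSeminorm ℝ :=
    { toFun := fun x => wapsN d v x + wapsN e w x
      map_zero' := by simp only [wapsN_zero hd, wapsN_zero he, add_zero]
      add_le' := hadd
      neg' := fun x => by simp only [wapsN_neg hd, wapsN_neg he] }
  have hNdef : ∀ x, N x = wapsN d v x + wapsN e w x := fun x => rfl
  have htb := waps_tb (fun x => wapsN d v x + wapsN e w x) hadd
    (fun ε hε => (wapsN_ap hza (ε / 2) (by linarith)).waps_mono fun x hx => by
      have hx' : wapsN (wapsProd d e) z x < ε / 2 := hx
      change wapsN d v x + wapsN e w x < ε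
      linarith [hle1 x, hle2 x])
    (fun ε hε => by
      obtain ⟨r, hr, h⟩ := wapsN_cont hp hzm hza (ε / 2) (by linarith)
      exact ⟨r, hr, fun s hs => by linarith [h s hs, hle1 s, hle2 s]⟩)
  -- the control of the seminorm of `f`
  have hctrl : ∀ ε : ℝ≥0∞, 0 < ε → ∃ δ > 0, ∀ x, N x < δ → wapsK d' f x ≤ ε := by
    intro ε hε
    obtain ⟨δ, hδ, h⟩ := hf ε hε
    obtain ⟨q, hq, hqδ⟩ := waps_exists_real (waps_half hδ)
    refine ⟨q, hq, fun x hx => ?_⟩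
    rw [hNdef] at hx
    have h1 : wapsK d v x < δ / 2 := by
      refine lt_of_lt_of_le ?_ hqδ
      rw [← ENNReal.ofReal_toReal (wapsK_ne_top hd v x)]
      exact (ENNReal.ofReal_lt_ofReal_iff hq).2 (by
        have := wapsN_nonneg e w x
        change wapsN d v x < q
        linarith)
    have h2 : wapsK e w x < δ / 2 := by
      refine lt_of_lt_of_le ?_ hqδ
      rw [← ENNReal.ofReal_toReal (wapsK_ne_top he w x)]
      exact (ENNReal.ofReal_lt_ofReal_iff hq).2 (by
        have := wapsN_nonneg d v x
        change wapsN e w x < q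
        linarith)
    obtain ⟨l, ⟨h3, h4⟩, hl⟩ :=
      (((wapsK_lt h1).and (wapsK_lt h2)).and (eventually_gt_atTop (0 : ℝ))).exists
    obtain ⟨L₀, hL₀, h⟩ := h l hl
    refine wapsK_le_of ?_
    filter_upwards [eventually_ge_atTop L₀] with L hL
    refine (h L hL x ?_).le
    have h5 := ENNReal.add_lt_add h3 h4
    rw [ENNReal.add_halves] at h5
    refine lt_of_le_of_lt ?_ h5
    exact (wapsA_mono (ae_of_all _ fun t => wapsC_prod_le v w x t)).trans
      (wapsA_add (wapsC_meas hd hv x))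
  set E : ℝ → ℂ := fun x => Complex.exp (Complex.I * ((lam * x : ℝ) : ℂ)) with hE
  have hE1 : ∀ x, ‖E x‖ = 1 := fun x => by
    rw [hE]; simp only []; rw [mul_comm, Complex.norm_exp_ofReal_mul_I]
  have hec : ∀ ε > 0, ∃ δ > 0, ∀ x, N x < δ → ‖E x - 1‖ < ε := by
    intro ε hε
    by_contra! hcon
    choose x hx1 hx2 using fun n : ℕ => hcon (1 / ((n : ℝ) + 1)) (by positivity)
    have h1 : Tendsto (fun n => wapsK d' f (x n)) atTop (𝓝 0) := by
      rw [ENNReal.tendsto_nhds_zero]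
      intro ε' hε'
      obtain ⟨δ, hδ, h⟩ := hctrl ε' hε'
      filter_upwards [tendsto_one_div_add_atTop_nhds_zero_nat.eventually_lt_const hδ] with n hn
      exact h _ ((hx1 n).trans hn)
    have h2 := hlam x (by simpa only [waps_weylDinf] using h1)
    rw [tendsto_iff_norm_sub_tendsto_zero] at h2
    obtain ⟨n, hn⟩ := (h2.eventually_lt_const hε).exists
    exact absurd hn (not_lt.2 (hx2 n))
  obtain ⟨ψ, hψ, hψ1, C, hC, hψC⟩ := waps_dual_N N htb (wapsN d v) (wapsN e w) hNdef
    (wapsN_nonneg d v) (wapsN_nonneg e w) (wapsN_abs hd hv) (wapsN_abs he hw) E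
    (fun x y => by
      simp only [hE]; rw [← Complex.exp_add]; congr 1; push_cast; ring) hE1 hec
  obtain ⟨μ, hμ⟩ := waps_char_real ψ hψ hψ1 (fun ε hε => by
    obtain ⟨r, hr, h⟩ := wapsN_cont hd hv hva (ε / C) (by positivity)
    refine ⟨r, hr, fun x hx => (hψC x).1.trans_lt ?_⟩
    have := h x hx.le
    rw [lt_div_iff₀ hC] at this
    linarith)
  refine Set.mem_add.2 ⟨μ, waps_mem_WMod hd (C := C) fun x => ?_, lam - μ,
    waps_mem_WMod he (C := C) fun x => ?_, by ring⟩
  · rw [← hμ]; exact (hψC x).1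
  · refine le_trans (le_of_eq ?_) (hψC x).2
    have h1 : ψ x - E x =
        -(ψ x * (Complex.exp (Complex.I * (((lam - μ) * x : ℝ) : ℂ)) - 1)) := by
      have : E x = ψ x * Complex.exp (Complex.I * (((lam - μ) * x : ℝ) : ℂ)) := by
        rw [hμ, ← Complex.exp_add]
        simp only [hE]; congr 1; push_cast; ring
      rw [this]; ring
    rw [h1, norm_neg, norm_mul, hψ1, one_mul]

theorem waps_final {U : Type*} [MetricSpace U] [CompleteSpace U] (x₀ : U)
    (g : ℝ → U) (hg : MemWp bdist 1 x₀ g)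
    (F : ℝ → Closeds U) (hFne : ∀ t : ℝ, (F t : Set U).Nonempty)
    (hF : MemWp clDist 1 (⟨{x₀}, isClosed_singleton⟩ : Closeds U) F)
    (η : ℝ → ℝ) (hηmono : StrictMonoOn η (Set.Ici 0)) (hη0 : η 0 = 0)
    (hηpos : ∀ t > (0 : ℝ), 0 < η t) :
    ∃ f : ℝ → U, MemWp bdist 1 x₀ f ∧
      WMod bdist f ⊆ WMod bdist g + WMod clDist F ∧
      (∀ᵐ t ∂(volume : Measure ℝ), f t ∈ (F t : Set U)) ∧
      (∀ᵐ t ∂(volume : Measure ℝ),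
        dist (f t) (g t) ≤
          Metric.infDist (g t) (F t) + η (Metric.infDist (g t) (F t))) := by
  have hd := waps_bdist_dist U
  have he := waps_clDist_dist U
  have hgm : AEStronglyMeasurable g := hg.1.1
  have hFm : AEStronglyMeasurable F := hF.1.1
  have hga := waps_memWp_ap hg
  have hFa := waps_memWp_ap hF
  have ha : WapsAPC (wapsC (wapsProd bdist clDist) (fun t => (g t, F t))) :=
    waps_joint_ap hd he hgm hFm hga hFa
  obtain ⟨f, hf, hsel⟩ := waps_selection ha hFne
    ⟨hFm, (WapsCtrl.refl _).mono fun τ => ae_of_all _ fun t =>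
      ENNReal.ofReal_le_ofReal (le_max_right _ _)⟩ g
    ⟨hgm, (WapsCtrl.refl _).mono fun τ => ae_of_all _ fun t =>
      ENNReal.ofReal_le_ofReal (le_max_left _ _)⟩ η hηmono hη0 hηpos
  exact ⟨f, waps_memWp_of hd hf.1 (hf.ap ha), waps_mod hd he hgm hFm hga hFa hf.2,
    hsel.mono fun t h => h.1, hsel.mono fun t h => h.2⟩

open TopologicalSpace in
/-- **Theorem 1 (selection theorem for `W(ℝ,U)`).**
Let `(U,ρ)` be a complete metric space, `g ∈ W(ℝ,U)`, `F ∈ W(ℝ, cl U)`.  Then for any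
increasing `η : [0,∞) → [0,∞)` with `η 0 = 0` and `η t > 0` for `t > 0` there is
`f ∈ W(ℝ,U)` with `Mod f ⊆ Mod g + Mod F`, `f(t) ∈ F(t)` a.e. and
`ρ(f(t), g(t)) ≤ ρ(g(t), F(t)) + η(ρ(g(t), F(t)))` a.e. -/
theorem weyl_ap_selection {U : Type*} [MetricSpace U] [CompleteSpace U] (x₀ : U)
    (g : ℝ → U) (hg : MemWp bdist 1 x₀ g)
    (F : ℝ → Closeds U) (hFne : ∀ t : ℝ, (F t : Set U).Nonempty)
    (hF : MemWp clDist 1 (⟨{x₀}, isClosed_singleton⟩ : Closeds U) F)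
    (η : ℝ → ℝ) (hηmono : StrictMonoOn η (Set.Ici 0)) (hη0 : η 0 = 0)
    (hηpos : ∀ t > (0 : ℝ), 0 < η t) :
    ∃ f : ℝ → U, MemWp bdist 1 x₀ f ∧
      WMod bdist f ⊆ WMod bdist g + WMod clDist F ∧
      (∀ᵐ t ∂(volume : Measure ℝ), f t ∈ (F t : Set U)) ∧
      (∀ᵐ t ∂(volume : Measure ℝ),
        dist (f t) (g t) ≤
          Metric.infDist (g t) (F t) + η (Metric.infDist (g t) (F t))) := by
  exact waps_final x₀ g hg F hFne hF η hηmono hη0 hηpos
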